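/- Let ζ ∈ Conc and q(x) = x²/2. Then there exists a unique functional Z : LC(ℝ) → ℝ such that: (i) Z is τ-upper semicontinuous; (ii) Z is a simple, translation invariant and dually epi-translation invariant valuation that vanishes on indicator functions of closed intervals; (iii) Z(a·q + I_{[-m,m]}) = 2m·ζ(a) for all a > 0 and m > 0. -/

import Mathlib

open MeasureTheory Filter Topology Pointwise Asymptotics

noncomputable section

variable {E : Type*} [NormedAddCommGroup E] [NormedSpace ℝ E]

/-- The effective domain of an extended-real-valued function. -/
def edom (u : E → EReal) : Set E := {x | u x < ⊤}

/-- `u` has Lipschitz constant `L` on the interior of its domain. -/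
def LipBound (u : E → EReal) (L : ℝ) : Prop :=
  ∀ x ∈ interior (edom u), ∀ y ∈ interior (edom u),
    |(u x).toReal - (u y).toReal| ≤ L * ‖x - y‖

/-- Membership in `LC`: proper, lower semicontinuous, convex, compact domain,
Lipschitz on the interior of the domain. -/
def IsLC (u : E → EReal) : Prop :=
  (∀ x y : E, ∀ t : ℝ, 0 < t → t < 1 →
      u (t • x + (1 - t) • y) ≤ (t : EReal) * u x + ((1 - t : ℝ) : EReal) * u y) ∧
  LowerSemicontinuous u ∧
  (∀ x, u x ≠ ⊥) ∧
  (∃ x, u x ≠ ⊤) ∧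
  IsCompact (edom u) ∧
  (∃ L : ℝ, 0 < L ∧ LipBound u L)

/-- τ-convergence: epi-convergence together with uniformly bounded Lipschitz constants. -/
def TauConv (uk : ℕ → E → EReal) (u : E → EReal) : Prop :=
  (∀ k, IsLC (uk k)) ∧ IsLC u ∧
  (∀ (x : E) (xk : ℕ → E), Tendsto xk atTop (𝓝 x) →
      u x ≤ liminf (fun k => uk k (xk k)) atTop) ∧
  (∀ x : E, ∃ xk : ℕ → E, Tendsto xk atTop (𝓝 x) ∧
      Tendsto (fun k => uk k (xk k)) atTop (𝓝 (u x))) ∧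
  (∃ M : ℝ, 0 < M ∧ ∀ k, LipBound (uk k) M)

/-- Valuation property on `LC`. -/
def IsVal (Z : (E → EReal) → ℝ) : Prop :=
  ∀ u v : E → EReal, IsLC u → IsLC v → IsLC (fun x => min (u x) (v x)) →
    Z (fun x => min (u x) (v x)) + Z (fun x => max (u x) (v x)) = Z u + Z v

/-- τ-upper semicontinuity. -/
def TauUSC (Z : (E → EReal) → ℝ) : Prop :=
  ∀ (uk : ℕ → E → EReal) (u : E → EReal), TauConv uk u →
    limsup (fun k => Z (uk k)) atTop ≤ Z u

/-- τ-continuity. -/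
def TauCont (Z : (E → EReal) → ℝ) : Prop :=
  ∀ (uk : ℕ → E → EReal) (u : E → EReal), TauConv uk u →
    Tendsto (fun k => Z (uk k)) atTop (𝓝 (Z u))

/-- Translation invariance. -/
def TransInv (Z : (E → EReal) → ℝ) : Prop :=
  ∀ u : E → EReal, IsLC u → ∀ y : E, Z (fun x => u (x - y)) = Z u

/-- Dual epi-translation invariance. -/
def DualTransInv (Z : (E → EReal) → ℝ) : Prop :=
  ∀ u : E → EReal, IsLC u → ∀ (l : E →ₗ[ℝ] ℝ) (c : ℝ),
    Z (fun x => u x + ((l x + c : ℝ) : EReal)) = Z u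

/-- SL_n invariance. -/
def SLInv (Z : (E → EReal) → ℝ) : Prop :=
  ∀ u : E → EReal, IsLC u → ∀ φ : E →ₗ[ℝ] E, LinearMap.det φ = 1 →
    Z (fun x => u (φ x)) = Z u

/-- The class `Conc`. -/
def IsConc (ζ : ℝ → ℝ) : Prop :=
  (∀ t ∈ Set.Ici (0 : ℝ), 0 ≤ ζ t) ∧ ConcaveOn ℝ (Set.Ici 0) ζ ∧
  Tendsto ζ (𝓝[>] 0) (𝓝 0) ∧
  Tendsto (fun t => ζ t / t) atTop (𝓝 0)

open Classical in
/-- `(∞-valued) indicator function` of a set. -/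
noncomputable def eIndicator (K : Set E) : E → EReal := fun x =>
  if x ∈ K then (0 : EReal) else ⊤

/-- Real part of an extended-real-valued function. -/
def toRealFn (u : E → EReal) : E → ℝ := fun x => (u x).toReal

open Classical in
/-- Second derivative of `u`, set to `0` where `u` is not twice differentiable. -/
noncomputable def secondDeriv (u : ℝ → EReal) : ℝ → ℝ := fun x =>
  if DifferentiableAt ℝ (toRealFn u) x ∧ DifferentiableAt ℝ (deriv (toRealFn u)) x
  then deriv (deriv (toRealFn u)) x
  else 0

/-- The properties required of `Z` in Statement 18: τ-upper semicontinuity; being a simple,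
translation and dually epi-translation invariant valuation vanishing on indicator functions of
closed intervals; and `Z(a·q + I_{[-m,m]}) = 2m·ζ(a)` for all `a, m > 0`, where `q(x) = x²/2`. -/
def GoodVal (ζ : ℝ → ℝ) (Z : (ℝ → EReal) → ℝ) : Prop :=
  TauUSC Z ∧ IsVal Z ∧ TransInv Z ∧ DualTransInv Z ∧
  (∀ u : ℝ → EReal, IsLC u → (∃ x : ℝ, edom u = {x}) → Z u = 0) ∧
  (∀ a b : ℝ, a ≤ b → Z (eIndicator (Set.Icc a b)) = 0) ∧
  (∀ a m : ℝ, 0 < a → 0 < m →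
    Z (fun x => ((a * (x ^ 2 / 2) : ℝ) : EReal) + eIndicator (Set.Icc (-m) m) x) =
      2 * m * ζ a)

/-- Right derivative. -/
def rd (f : ℝ → ℝ) (x : ℝ) : ℝ := derivWithin f (Set.Ioi x) x

open Classical in
/-- The function equal to `f` on `[a,b]` and `⊤` elsewhere. -/
def mkf (f : ℝ → ℝ) (a b : ℝ) : ℝ → EReal := fun x =>
  if x ∈ Set.Icc a b then (f x : EReal) else ⊤

lemma mkf_mem {f : ℝ → ℝ} {a b x : ℝ} (h : x ∈ Set.Icc a b) : mkf f a b x = (f x : EReal) := by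
  simp only [mkf, if_pos h]

lemma mkf_notMem {f : ℝ → ℝ} {a b x : ℝ} (h : x ∉ Set.Icc a b) : mkf f a b x = ⊤ := by
  simp only [mkf, if_neg h]

lemma le_mkf (f : ℝ → ℝ) (a b x : ℝ) : (f x : EReal) ≤ mkf f a b x := by
  by_cases h : x ∈ Set.Icc a b
  · rw [mkf_mem h]
  · rw [mkf_notMem h]; exact le_top

lemma edom_mkf (f : ℝ → ℝ) (a b : ℝ) : edom (mkf f a b) = Set.Icc a b := by
  ext x
  by_cases h : x ∈ Set.Icc a b
  · simp only [edom, Set.mem_ofPred_eq, mkf_mem h, EReal.coe_lt_top, h]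
  · simp only [edom, Set.mem_ofPred_eq, mkf_notMem h, lt_self_iff_false, h]

lemma mkf_congr {f g : ℝ → ℝ} {a b : ℝ} (h : ∀ x ∈ Set.Icc a b, f x = g x) :
    mkf f a b = mkf g a b := by
  ext1 x
  by_cases hx : x ∈ Set.Icc a b
  · rw [mkf_mem hx, mkf_mem hx, h x hx]
  · rw [mkf_notMem hx, mkf_notMem hx]

section convexfacts
variable {f : ℝ → ℝ} (hf : ConvexOn ℝ Set.univ f)
include hf

lemma rd_hasDeriv (x : ℝ) : HasDerivWithinAt f (rd f x) (Set.Ioi x) x :=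
  hf.hasDerivWithinAt_rightDeriv_of_mem_interior (by simp)

lemma rd_mono : Monotone (rd f) := by
  have := hf.monotoneOn_rightDeriv
  rw [interior_univ] at this
  exact fun x y h => this (Set.mem_univ _) (Set.mem_univ _) h

lemma rd_sub (x y : ℝ) : f x + rd f x * (y - x) ≤ f y := by
  rcases lt_trichotomy x y with h | h | h
  · have := hf.rightDeriv_le_slope_of_mem_interior (x := x) (y := y) (by simp) (Set.mem_univ _) h
    rw [slope_def_field, le_div_iff₀ (by linarith)] at this
    unfold rd; linarith
  · subst h; simp
  · have h1 := hf.slope_le_leftDeriv_of_mem_interior (x := y) (y := x) (Set.mem_univ _) (by simp) h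
    have h2 := hf.leftDeriv_le_rightDeriv_of_mem_interior (x := x) (by simp)
    have h3 := h1.trans h2
    rw [slope_def_field, div_le_iff₀ (by linarith)] at h3
    unfold rd; nlinarith

lemma cvx_cont : Continuous f := by
  have := hf.continuousOn_interior
  rw [interior_univ] at this
  exact continuousOn_univ.mp this

lemma cvx_lip {a b L : ℝ} (ha : -L ≤ rd f a) (hb : rd f b ≤ L) :
    ∀ x ∈ Set.Icc a b, ∀ y ∈ Set.Icc a b, |f x - f y| ≤ L * |x - y| := by
  have key : ∀ x ∈ Set.Icc a b, ∀ y ∈ Set.Icc a b, f y - f x ≤ L * |x - y| := by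
    intro x hx y hy
    have h1 := rd_sub hf y x
    have h2 := rd_mono hf hy.1
    have h3 := rd_mono hf hy.2
    rcases le_total x y with h | h
    · rw [abs_of_nonpos (by linarith)]; nlinarith
    · rw [abs_of_nonneg (by linarith)]; nlinarith
  intro x hx y hy
  rw [abs_le]
  have h1 := key x hx y hy
  have h2 := key y hy x hx
  rw [abs_sub_comm] at h2
  constructor <;> linarith

lemma isLC_mkf {a b : ℝ} (hab : a ≤ b) : IsLC (mkf f a b) := by
  refine ⟨?_, ?_, ?_, ?_, ?_, ?_⟩
  · intro x y t ht0 ht1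
    have ht1' : 0 < 1 - t := by linarith
    by_cases hx : x ∈ Set.Icc a b
    · by_cases hy : y ∈ Set.Icc a b
      · have hz : t • x + (1 - t) • y ∈ Set.Icc a b :=
          (convex_Icc a b) hx hy ht0.le ht1'.le (by ring)
        rw [mkf_mem hx, mkf_mem hy, mkf_mem hz]
        have := hf.2 (Set.mem_univ x) (Set.mem_univ y) ht0.le ht1'.le (by ring)
        rw [smul_eq_mul, smul_eq_mul] at this
        exact_mod_cast this
      · rw [mkf_notMem hy, mkf_mem hx, EReal.coe_mul_top_of_pos ht1',
          ← EReal.coe_mul, EReal.coe_add_top]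
        exact le_top
    · rw [mkf_notMem hx, EReal.coe_mul_top_of_pos ht0]
      by_cases hy : y ∈ Set.Icc a b
      · rw [mkf_mem hy, ← EReal.coe_mul, EReal.top_add_coe]
        exact le_top
      · rw [mkf_notMem hy, EReal.coe_mul_top_of_pos ht1', EReal.top_add_top]
        exact le_top
  · intro x c hc
    by_cases hx : x ∈ Set.Icc a b
    · rw [mkf_mem hx] at hc
      have hcont : Continuous (fun x => (f x : EReal)) :=
        continuous_coe_real_ereal.comp (cvx_cont hf)
      filter_upwards [hcont.continuousAt.eventually (lt_mem_nhds hc)] with z hz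
      exact lt_of_lt_of_le hz (le_mkf f a b z)
    · rw [mkf_notMem hx] at hc
      filter_upwards [isClosed_Icc.isOpen_compl.mem_nhds hx] with z hz
      rw [mkf_notMem hz]; exact hc
  · intro x h
    have := le_mkf f a b x
    rw [h] at this
    simp at this
  · exact ⟨a, by rw [mkf_mem ⟨le_rfl, hab⟩]; exact EReal.coe_ne_top _⟩
  · rw [edom_mkf]; exact isCompact_Icc
  · refine ⟨max |rd f a| |rd f b| + 1, by positivity, ?_⟩
    intro x hx y hy
    rw [edom_mkf] at hx hy
    have hx := interior_subset hx
    have hy := interior_subset hy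
    rw [mkf_mem hx, mkf_mem hy, EReal.toReal_coe, EReal.toReal_coe, Real.norm_eq_abs]
    refine cvx_lip hf ?_ ?_ x hx y hy
    · have := neg_abs_le (rd f a)
      have := le_max_left |rd f a| |rd f b|
      linarith
    · have := le_abs_self (rd f b)
      have := le_max_right |rd f a| |rd f b|
      linarith

end convexfacts

lemma convexOn_of_subgrad {p : ℝ → ℝ} (m : ℝ → ℝ) (h : ∀ x y, p x + m x * (y - x) ≤ p y) :
    ConvexOn ℝ Set.univ p := by
  refine ⟨convex_univ, ?_⟩
  intro x _ y _ a b ha hb hab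
  simp only [smul_eq_mul]
  have h1 := h (a * x + b * y) x
  have h2 := h (a * x + b * y) y
  have hb' : b = 1 - a := by linarith
  subst hb'
  nlinarith

lemma tauConv_mkf (F : ℕ → ℝ → ℝ) (f : ℝ → ℝ) (A B : ℕ → ℝ) (a b M : ℝ)
    (hF : ∀ k, ConvexOn ℝ Set.univ (F k)) (hf : ConvexOn ℝ Set.univ f)
    (hAB : ∀ k, A k ≤ B k) (hab : a ≤ b)
    (hA : Tendsto A atTop (𝓝 a)) (hB : Tendsto B atTop (𝓝 b)) (hM : 0 < M)
    (hL : ∀ k, ∀ x ∈ Set.Icc (A k) (B k), ∀ y ∈ Set.Icc (A k) (B k),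
      |F k x - F k y| ≤ M * |x - y|)
    (e : ℕ → ℝ) (he : Tendsto e atTop (𝓝 0))
    (hFe : ∀ k, ∀ x ∈ Set.Icc (A k) (B k), |F k x - f x| ≤ e k) :
    TauConv (fun k => mkf (F k) (A k) (B k)) (mkf f a b) := by
  have hcont : Continuous f := cvx_cont hf
  have hnot : ∀ x ∉ Set.Icc a b, ∀ xk : ℕ → ℝ, Tendsto xk atTop (𝓝 x) →
      ∀ᶠ k in atTop, mkf (F k) (A k) (B k) (xk k) = ⊤ := by
    intro x hx xk hxk
    rw [Set.mem_Icc, not_and_or, not_le, not_le] at hx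
    rcases hx with hx | hx
    · filter_upwards [hxk.eventually_lt hA hx] with k hk
      exact mkf_notMem (fun h => absurd h.1 (not_le.mpr hk))
    · filter_upwards [hB.eventually_lt hxk hx] with k hk
      exact mkf_notMem (fun h => absurd h.2 (not_le.mpr hk))
  refine ⟨fun k => isLC_mkf (hF k) (hAB k), isLC_mkf hf hab, ?_, ?_, M, hM, ?_⟩
  · intro x xk hxk
    by_cases hx : x ∈ Set.Icc a b
    · rw [mkf_mem hx]
      have h1 : Tendsto (fun k => ((f (xk k) - e k : ℝ) : EReal)) atTop (𝓝 (f x : EReal)) := by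
        have : Tendsto (fun k => f (xk k) - e k) atTop (𝓝 (f x - 0)) :=
          ((hcont.tendsto x).comp hxk).sub he
        rw [sub_zero] at this
        exact (continuous_coe_real_ereal.tendsto _).comp this
      rw [← h1.liminf_eq]
      refine liminf_le_liminf (Eventually.of_forall fun k => ?_)
      beta_reduce
      by_cases hk : xk k ∈ Set.Icc (A k) (B k)
      · rw [mkf_mem hk]
        have := abs_le.mp (hFe k _ hk)
        exact_mod_cast (by linarith : f (xk k) - e k ≤ F k (xk k))
      · rw [mkf_notMem hk]; exact le_top
    · have h1 : Tendsto (fun k => mkf (F k) (A k) (B k) (xk k)) atTop (𝓝 ⊤) :=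
        tendsto_const_nhds.congr' ((hnot x hx xk hxk).mono fun k hk => hk.symm)
      rw [h1.liminf_eq]; exact le_top
  · intro x
    by_cases hx : x ∈ Set.Icc a b
    · have hxk : Tendsto (fun k => max (A k) (min (B k) x)) atTop (𝓝 x) := by
        have := hA.max (hB.min (tendsto_const_nhds (x := x)))
        rwa [min_eq_right hx.2, max_eq_right hx.1] at this
      refine ⟨fun k => max (A k) (min (B k) x), hxk, ?_⟩
      have hk : ∀ k, max (A k) (min (B k) x) ∈ Set.Icc (A k) (B k) := fun k =>
        ⟨le_max_left _ _, max_le (hAB k) (min_le_left _ _)⟩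
      have h0 : (fun k => mkf (F k) (A k) (B k) (max (A k) (min (B k) x))) =
          fun k => ((F k (max (A k) (min (B k) x)) : ℝ) : EReal) := by
        ext1 k; exact mkf_mem (hk k)
      rw [h0, mkf_mem hx]
      refine (continuous_coe_real_ereal.tendsto _).comp ?_
      have h1 : Tendsto (fun k => f (max (A k) (min (B k) x))) atTop (𝓝 (f x)) :=
        (hcont.tendsto x).comp hxk
      have h2 : Tendsto (fun k => F k (max (A k) (min (B k) x)) -
          f (max (A k) (min (B k) x))) atTop (𝓝 0) :=
        squeeze_zero_norm (fun k => by rw [Real.norm_eq_abs]; exact hFe k _ (hk k)) he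
      have := h2.add h1
      simpa using this
    · refine ⟨fun _ => x, tendsto_const_nhds, ?_⟩
      rw [mkf_notMem hx]
      exact tendsto_const_nhds.congr'
        ((hnot x hx _ tendsto_const_nhds).mono fun k hk => hk.symm)
  · intro k x hx y hy
    rw [edom_mkf] at hx hy
    have hx := interior_subset hx
    have hy := interior_subset hy
    beta_reduce
    rw [mkf_mem hx, mkf_mem hy, EReal.toReal_coe, EReal.toReal_coe, Real.norm_eq_abs]
    exact hL k x hx y hy

/-- Clamp to `[a,b]`. -/
def cl (a b x : ℝ) : ℝ := max a (min b x)

lemma cl_mem {a b : ℝ} (hab : a ≤ b) (x : ℝ) : cl a b x ∈ Set.Icc a b :=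
  ⟨le_max_left _ _, max_le hab (min_le_left _ _)⟩

lemma cl_of_mem {a b x : ℝ} (h : x ∈ Set.Icc a b) : cl a b x = x := by
  unfold cl; rw [min_eq_right h.2, max_eq_right h.1]

lemma cl_of_le {a b x : ℝ} (hab : a ≤ b) (h : x ≤ a) : cl a b x = a := by
  unfold cl; rw [min_eq_right (h.trans hab), max_eq_left h]

lemma cl_of_ge {a b x : ℝ} (hab : a ≤ b) (h : b ≤ x) : cl a b x = b := by
  unfold cl; rw [min_eq_left h, max_eq_right hab]

/-- `f` is an extension of a function on `[a,b]` with slopes `∓M` outside. -/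
structure SlopeExt (f : ℝ → ℝ) (a b M : ℝ) : Prop where
  hab : a ≤ b
  cvx : ConvexOn ℝ Set.univ f
  lip : ∀ x y, |f x - f y| ≤ M * |x - y|
  left : ∀ x, x ≤ a → f x = f a + M * (a - x)
  right : ∀ x, b ≤ x → f x = f b + M * (x - b)

lemma SlopeExt.eq_cl {f : ℝ → ℝ} {a b M : ℝ} (h : SlopeExt f a b M) (x : ℝ) :
    f x = f (cl a b x) + M * |x - cl a b x| := by
  rcases le_total x a with hx | hx
  · rw [cl_of_le h.hab hx, abs_of_nonpos (by linarith), h.left x hx]; ring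
  rcases le_total x b with hx' | hx'
  · rw [cl_of_mem ⟨hx, hx'⟩]; simp
  · rw [cl_of_ge h.hab hx', abs_of_nonneg (by linarith), h.right x hx']

lemma ext_exists (g : ℝ → ℝ) (a b M : ℝ) (hab : a ≤ b) (hM : 0 < M)
    (hg : ConvexOn ℝ (Set.Icc a b) g)
    (hl : ∀ x ∈ Set.Icc a b, ∀ y ∈ Set.Icc a b, |g x - g y| ≤ M * |x - y|) :
    ∃ f, SlopeExt f a b M ∧ ∀ x ∈ Set.Icc a b, f x = g x := by
  have habs : ∀ x, ∀ y ∈ Set.Icc a b, |x - cl a b x| + |cl a b x - y| = |x - y| := by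
    intro x y hy
    rcases le_total x a with hx | hx
    · rw [cl_of_le hab hx, abs_of_nonpos (by linarith), abs_of_nonpos (by linarith [hy.1]),
        abs_of_nonpos (by linarith [hy.1])]; ring
    rcases le_total x b with hx' | hx'
    · rw [cl_of_mem ⟨hx, hx'⟩]; simp
    · rw [cl_of_ge hab hx', abs_of_nonneg (by linarith), abs_of_nonneg (by linarith [hy.2]),
        abs_of_nonneg (by linarith [hy.2])]; ring
  set f : ℝ → ℝ := fun x => g (cl a b x) + M * |x - cl a b x| with hf
  have hle : ∀ x, ∀ y ∈ Set.Icc a b, f x ≤ g y + M * |x - y| := by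
    intro x y hy
    have h1 := (abs_le.mp (hl _ (cl_mem hab x) y hy)).2
    have h2 := habs x y hy
    simp only [hf]
    rw [← h2]; linarith
  have hfl : ∀ x y, f x ≤ f y + M * |x - y| := by
    intro x y
    have h1 := hle x _ (cl_mem hab y)
    have h2 := abs_sub_le x y (cl a b y)
    have h3 : f y = g (cl a b y) + M * |y - cl a b y| := rfl
    nlinarith
  have hfg : ∀ x ∈ Set.Icc a b, f x = g x := by
    intro x hx; simp only [hf, cl_of_mem hx]; simp
  refine ⟨f, ⟨hab, ⟨convex_univ, ?_⟩, ?_, ?_, ?_⟩, hfg⟩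
  · intro x _ y _ s t hs ht hst
    simp only [smul_eq_mul]
    have hz := (convex_Icc a b) (cl_mem hab x) (cl_mem hab y) hs ht hst
    have h1 := hle (s * x + t * y) _ hz
    have h2 := hg.2 (cl_mem hab x) (cl_mem hab y) hs ht hst
    simp only [smul_eq_mul] at h1 h2
    have h3 : |s * x + t * y - (s * cl a b x + t * cl a b y)| ≤
        s * |x - cl a b x| + t * |y - cl a b y| := by
      have : s * x + t * y - (s * cl a b x + t * cl a b y) =
        s * (x - cl a b x) + t * (y - cl a b y) := by ring
      rw [this]
      refine (abs_add_le _ _).trans ?_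
      rw [abs_mul, abs_mul, abs_of_nonneg hs, abs_of_nonneg ht]
    have h4 : f x = g (cl a b x) + M * |x - cl a b x| := rfl
    have h5 : f y = g (cl a b y) + M * |y - cl a b y| := rfl
    rw [h4, h5]
    nlinarith
  · intro x y
    rw [abs_le]
    have h1 := hfl x y
    have h2 := hfl y x
    rw [abs_sub_comm] at h2
    constructor <;> linarith
  · intro x hx
    rw [hfg a ⟨le_rfl, hab⟩]
    simp only [hf, cl_of_le hab hx]
    rw [abs_of_nonpos (by linarith)]; ring
  · intro x hx
    rw [hfg b ⟨hab, le_rfl⟩]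
    simp only [hf, cl_of_ge hab hx]
    rw [abs_of_nonneg (by linarith)]

lemma ext_of_mkf {f₀ : ℝ → ℝ} {a b M : ℝ} (hab : a ≤ b) (hM : 0 < M)
    (hf : ConvexOn ℝ (Set.Icc a b) f₀)
    (hl : ∀ x ∈ Set.Icc a b, ∀ y ∈ Set.Icc a b, |f₀ x - f₀ y| ≤ M * |x - y|) :
    ∃ f, SlopeExt f a b M ∧ mkf f₀ a b = mkf f a b := by
  obtain ⟨f, h1, h2⟩ := ext_exists f₀ a b M hab hM hf hl
  exact ⟨f, h1, mkf_congr fun x hx => (h2 x hx).symm⟩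

lemma lc_coe {u : ℝ → EReal} (h : IsLC u) {x : ℝ} (hx : x ∈ edom u) :
    ((u x).toReal : EReal) = u x :=
  EReal.coe_toReal (ne_of_lt hx) (h.2.2.1 x)

lemma lc_dom {u : ℝ → EReal} (h : IsLC u) : ∃ a b, a ≤ b ∧ edom u = Set.Icc a b := by
  obtain ⟨hc, -, hbot, ⟨x0, hx0⟩, hK, -⟩ := id h
  have hne : (edom u).Nonempty := ⟨x0, lt_top_iff_ne_top.mpr hx0⟩
  have hconv : Convex ℝ (edom u) := by
    rw [convex_iff_forall_pos]
    intro x hx y hy s t hs ht hst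
    have ht' : t = 1 - s := by linarith
    subst ht'
    have := hc x y s hs (by linarith)
    refine lt_of_le_of_lt this ?_
    rw [← lc_coe h hx, ← lc_coe h hy, ← EReal.coe_mul, ← EReal.coe_mul, ← EReal.coe_add]
    exact EReal.coe_lt_top _
  have hconn : IsConnected (edom u) := ⟨hne, hconv.isPreconnected⟩
  refine ⟨sInf (edom u), sSup (edom u), ?_, eq_Icc_of_connected_compact hconn hK⟩
  exact csInf_le_csSup hne hK.bddBelow hK.bddAbove

lemma lc_convexOn {u : ℝ → EReal} (h : IsLC u) {a b : ℝ} (hd : edom u = Set.Icc a b) :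
    ConvexOn ℝ (Set.Icc a b) (fun x => (u x).toReal) := by
  refine convexOn_iff_forall_pos.mpr ⟨convex_Icc a b, ?_⟩
  intro x hx y hy s t hs ht hst
  have hz := (convex_Icc a b) hx hy hs.le ht.le hst
  rw [← hd] at hx hy hz
  have ht' : t = 1 - s := by linarith
  subst ht'
  have := h.1 x y s hs (by linarith)
  rw [← lc_coe h hx, ← lc_coe h hy, ← lc_coe h hz] at this
  simp only [smul_eq_mul]
  exact_mod_cast this

lemma lc_lip {u : ℝ → EReal} (h : IsLC u) {a b M : ℝ} (hM : 0 < M) (hL : LipBound u M)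
    (hd : edom u = Set.Icc a b) :
    ∀ x ∈ Set.Icc a b, ∀ y ∈ Set.Icc a b, |(u x).toReal - (u y).toReal| ≤ M * |x - y| := by
  have hcv := lc_convexOn h hd
  set g : ℝ → ℝ := fun x => (u x).toReal with hg
  have hL' : ∀ x ∈ Set.Ioo a b, ∀ y ∈ Set.Ioo a b, |g x - g y| ≤ M * |x - y| := by
    intro x hx y hy
    have := hL x (by rw [hd, interior_Icc]; exact hx) y (by rw [hd, interior_Icc]; exact hy)
    rwa [Real.norm_eq_abs] at this
  -- upper estimate at an arbitrary point by lower semicontinuity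
  have hlow : ∀ x ∈ Set.Icc a b, ∀ c : ℝ, (∃ᶠ z in 𝓝 x, z ∈ Set.Icc a b ∧ g z ≤ c) → g x ≤ c := by
    intro x hx c hfr
    by_contra hlt
    push Not at hlt
    have h1 : (c : EReal) < u x := by
      rw [← lc_coe h (by rw [hd]; exact hx)]; exact_mod_cast hlt
    obtain ⟨z, ⟨hz, hzc⟩, hz'⟩ := (hfr.and_eventually (h.2.1 x c h1)).exists
    rw [← lc_coe h (by rw [hd]; exact hz)] at hz'
    have : c < g z := by exact_mod_cast hz'
    linarith
  -- one endpoint and one interior point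
  have hend : ∀ x ∈ Set.Icc a b, ∀ y ∈ Set.Ioo a b, |g x - g y| ≤ M * |x - y| := by
    intro x hx y hy
    by_cases hxi : x ∈ Set.Ioo a b
    · exact hL' x hxi y hy
    have hxy : x ≠ y := fun hh => hxi (hh ▸ hy)
    have hseg : ∀ t : ℝ, 0 < t → t < 1 → (1 - t) * x + t * y ∈ Set.Ioo a b := by
      intro t ht0 ht1
      constructor
      · nlinarith [hx.1, hy.1]
      · nlinarith [hx.2, hy.2]
    rw [abs_le]
    constructor
    · have hz := hseg (1/2) (by norm_num) (by norm_num)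
      have h1 := hcv.2 hx (Set.Ioo_subset_Icc_self hy) (by norm_num : (0:ℝ) ≤ 1 - 1/2)
        (by norm_num : (0:ℝ) ≤ 1/2) (by norm_num)
      have h2 := (abs_le.mp (hL' _ hz y hy)).1
      simp only [smul_eq_mul] at h1
      have h3 : (1 - 1/2) * x + 1/2 * y - y = 1/2 * (x - y) := by ring
      rw [h3, abs_mul, abs_of_pos (by norm_num : (0:ℝ) < 1/2)] at h2
      linarith
    · have : g x ≤ g y + M * |x - y| := by
        refine hlow x hx _ ?_
        have htend : Tendsto (fun t : ℝ => (1 - t) * x + t * y) (𝓝[>] 0) (𝓝 x) := by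
          have : Continuous (fun t : ℝ => (1 - t) * x + t * y) := by fun_prop
          have h0 := this.tendsto 0
          simp only [sub_zero, one_mul, zero_mul, add_zero] at h0
          exact h0.mono_left nhdsWithin_le_nhds
        refine htend.frequently (Eventually.frequently ?_)
        filter_upwards [Ioo_mem_nhdsGT (zero_lt_one (α := ℝ))] with t ht
        have hz := hseg t ht.1 ht.2
        refine ⟨Set.Ioo_subset_Icc_self hz, ?_⟩
        have h2 := (abs_le.mp (hL' _ hz y hy)).2
        have h3 : (1 - t) * x + t * y - y = (1 - t) * (x - y) := by ring
        rw [h3, abs_mul, abs_of_pos (by linarith [ht.2])] at h2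
        nlinarith [abs_nonneg (x - y), ht.1, mul_nonneg hM.le (abs_nonneg (x - y))]
      linarith
  have hend2 : ∀ x ∈ Set.Icc a b, ∀ y ∈ Set.Icc a b, x < y → |g x - g y| ≤ M * |x - y| := by
    intro x hx y hy hxy
    have hm : (x + y) / 2 ∈ Set.Ioo a b := ⟨by linarith [hx.1], by linarith [hy.2]⟩
    have h1 := hend x hx _ hm
    have h2 := hend y hy _ hm
    rw [abs_sub_comm, abs_of_nonneg (by linarith : 0 ≤ y - (x+y)/2)] at h2
    rw [abs_of_nonpos (by linarith : x - (x+y)/2 ≤ 0)] at h1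
    rw [abs_of_nonpos (by linarith : x - y ≤ 0)]
    have := abs_sub_le (g x) (g ((x+y)/2)) (g y)
    linarith
  intro x hx y hy
  rcases lt_trichotomy x y with hh | hh | hh
  · exact hend2 x hx y hy hh
  · subst hh; simp
  · rw [abs_sub_comm, abs_sub_comm x y]; exact hend2 y hy x hx hh

lemma lc_rep {u : ℝ → EReal} (h : IsLC u) {M : ℝ} (hM : 0 < M) (hL : LipBound u M) :
    ∃ f a b, SlopeExt f a b M ∧ u = mkf f a b := by
  obtain ⟨a, b, hab, hd⟩ := lc_dom h
  obtain ⟨f, h1, h2⟩ := ext_exists _ a b M hab hM (lc_convexOn h hd) (lc_lip h hM hL hd)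
  refine ⟨f, a, b, h1, ?_⟩
  ext1 x
  by_cases hx : x ∈ Set.Icc a b
  · rw [mkf_mem hx, h2 x hx, lc_coe h (by rw [hd]; exact hx)]
  · rw [mkf_notMem hx]
    rw [← hd] at hx
    simpa [edom] using hx

lemma lc_rep' {u : ℝ → EReal} (h : IsLC u) :
    ∃ f a b M, 0 < M ∧ SlopeExt f a b M ∧ u = mkf f a b := by
  obtain ⟨M, hM, hL⟩ := h.2.2.2.2.2
  obtain ⟨f, a, b, h1, h2⟩ := lc_rep h hM hL
  exact ⟨f, a, b, M, hM, h1, h2⟩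

section conc
variable {ζ : ℝ → ℝ} (hζ : IsConc ζ)
include hζ

lemma conc_ineq {x y s t : ℝ} (hx : 0 ≤ x) (hy : 0 ≤ y) (hs : 0 ≤ s) (ht : 0 ≤ t)
    (hst : s + t = 1) : s * ζ x + t * ζ y ≤ ζ (s * x + t * y) := by
  have := hζ.2.1.2 (Set.mem_Ici.mpr hx) (Set.mem_Ici.mpr hy) hs ht hst
  simpa only [smul_eq_mul] using this

lemma conc_zero : ζ 0 = 0 := by
  refine le_antisymm ?_ (hζ.1 0 (by simp))
  have h1 : Tendsto (fun t : ℝ => t * ζ 1 + (1 - t) * ζ 0) (𝓝[>] 0) (𝓝 (ζ 0)) := by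
    have : Continuous (fun t : ℝ => t * ζ 1 + (1 - t) * ζ 0) := by fun_prop
    have h0 := this.tendsto 0
    simp only [sub_zero, one_mul, zero_mul, zero_add] at h0
    exact h0.mono_left nhdsWithin_le_nhds
  refine le_of_tendsto_of_tendsto h1 hζ.2.2.1 ?_
  filter_upwards [Ioo_mem_nhdsGT (zero_lt_one (α := ℝ))] with t ht
  have := conc_ineq hζ (x := 1) (y := 0) zero_le_one le_rfl ht.1.le (by linarith [ht.2] : 0 ≤ 1 - t)
    (by ring)
  simpa using this

lemma conc_nonneg {t : ℝ} (ht : 0 ≤ t) : 0 ≤ ζ t := hζ.1 t ht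

lemma conc_mono {s t : ℝ} (hs : 0 ≤ s) (hst : s ≤ t) : ζ s ≤ ζ t := by
  rcases hst.eq_or_lt with h | h
  · rw [h]
  by_contra hlt
  push Not at hlt
  set d := t - s with hd
  have hdpos : 0 < d := by linarith
  have hz := conc_nonneg hζ hs
  set w := d * ζ s / (ζ s - ζ t) + d + 1 with hw
  have hq : 0 ≤ d * ζ s / (ζ s - ζ t) := div_nonneg (by positivity) (by linarith)
  have hwpos : 0 < w := by linarith
  have h1 := conc_ineq hζ (x := s) (y := s + w) hs (by linarith)
    (div_nonneg (by linarith : 0 ≤ w - d) hwpos.le) (div_nonneg hdpos.le hwpos.le)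
    (by field_simp; ring)
  have h2 : (w - d) / w * s + d / w * (s + w) = t := by
    field_simp; rw [hd]; ring
  rw [h2] at h1
  have h3 := conc_nonneg hζ (t := s + w) (by linarith)
  have h4 : (w - d) / w * ζ s ≤ ζ t := by
    have : 0 ≤ d / w * ζ (s + w) := by positivity
    linarith
  rw [div_mul_eq_mul_div, div_le_iff₀ hwpos] at h4
  have h5 : d * ζ s / (ζ s - ζ t) * (ζ s - ζ t) = d * ζ s :=
    div_mul_cancel₀ _ (by linarith)
  have h6 : w * (ζ s - ζ t) = d * ζ s + (d + 1) * (ζ s - ζ t) := by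
    rw [hw]; linear_combination h5
  nlinarith

lemma conc_lin {t : ℝ} (ht : 0 ≤ t) : ζ t ≤ ζ 1 * (1 + t) := by
  have hz := conc_nonneg hζ (zero_le_one)
  rcases le_total t 1 with h | h
  · have := conc_mono hζ ht h
    nlinarith
  · have hpos : 0 < t := by linarith
    have h1 := conc_ineq hζ (x := t) (y := 0) ht le_rfl (s := 1 / t) (t := 1 - 1 / t)
      (by positivity) (by rw [sub_nonneg, div_le_one hpos]; exact h) (by ring)
    rw [conc_zero hζ] at h1
    have h2 : 1 / t * t + (1 - 1 / t) * 0 = 1 := by field_simp; ring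
    rw [h2, mul_zero, add_zero, div_mul_eq_mul_div, one_mul, div_le_iff₀ hpos] at h1
    nlinarith

lemma conc_cont : ContinuousOn ζ (Set.Ici 0) := by
  intro x hx
  rcases (Set.mem_Ici.mp hx).eq_or_lt with h | h
  · subst h
    have h1 : ContinuousWithinAt ζ (Set.Ioi 0) 0 := by
      unfold ContinuousWithinAt
      rw [conc_zero hζ]; exact hζ.2.2.1
    exact continuousWithinAt_Ioi_iff_Ici.mp h1
  · have h1 := hζ.2.1.continuousOn_interior
    rw [interior_Ici] at h1
    exact (h1.continuousAt (Ioi_mem_nhds h)).continuousWithinAt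

lemma conc_jensen (N : ℕ) (hN : 0 < N) (l : ℝ) (hl : 0 < l) (s : ℕ → ℝ) (hs : ∀ i, 0 ≤ s i) :
    ∑ i ∈ Finset.range N, l * ζ (s i / l) ≤
      (N * l) * ζ ((∑ i ∈ Finset.range N, s i) / (N * l)) := by
  have hN' : (0 : ℝ) < N := by exact_mod_cast hN
  have h := hζ.2.1.le_map_sum (t := Finset.range N) (w := fun _ => (1 : ℝ) / N)
    (p := fun i => s i / l) (fun i _ => by positivity)
    (by rw [Finset.sum_const, Finset.card_range, nsmul_eq_mul]; field_simp)
    (fun i _ => Set.mem_Ici.mpr (div_nonneg (hs i) hl.le))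
  simp only [smul_eq_mul] at h
  rw [← Finset.mul_sum, ← Finset.mul_sum, ← Finset.sum_div] at h
  have h2 : 1 / (N : ℝ) * ((∑ i ∈ Finset.range N, s i) / l) =
    (∑ i ∈ Finset.range N, s i) / (N * l) := by field_simp
  rw [h2, one_div, inv_mul_le_iff₀ hN'] at h
  rw [← Finset.mul_sum]
  nlinarith

end conc

/-- `f` left of `y`, affine with slope `rd f y` right of `y`. -/
def Dext (f : ℝ → ℝ) (y x : ℝ) : ℝ := f (min x y) + rd f y * max (x - y) 0

/-- Truncation of `f` to `[c,d]`. -/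
def trunc (f : ℝ → ℝ) (c d x : ℝ) : ℝ := Dext f d x - Dext f c x

lemma Dext_le {f : ℝ → ℝ} {y x : ℝ} (h : x ≤ y) : Dext f y x = f x := by
  unfold Dext; rw [min_eq_left h, max_eq_right (by linarith)]; ring

lemma Dext_ge {f : ℝ → ℝ} {y x : ℝ} (h : y ≤ x) : Dext f y x = f y + rd f y * (x - y) := by
  unfold Dext; rw [min_eq_right h, max_eq_left (by linarith)]

/-- A convex function, zero left of `c`, affine with slope `s` right of `d`. -/
structure Piece (p : ℝ → ℝ) (c d s : ℝ) : Prop where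
  hcd : c ≤ d
  hs : 0 ≤ s
  cvx : ConvexOn ℝ Set.univ p
  zero : ∀ x, x ≤ c → p x = 0
  aff : ∀ x, d ≤ x → p x = p d + s * (x - d)
  nonneg : ∀ x, 0 ≤ p x
  lip : ∀ x y, |p x - p y| ≤ s * |x - y|

lemma Piece.lo {p : ℝ → ℝ} {c d s : ℝ} (h : Piece p c d s) (x : ℝ) : s * max (x - d) 0 ≤ p x := by
  rcases le_total x d with hx | hx
  · rw [max_eq_right (by linarith), mul_zero]; exact h.nonneg x
  · rw [max_eq_left (by linarith), h.aff x hx]; linarith [h.nonneg d]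

lemma Piece.hi {p : ℝ → ℝ} {c d s : ℝ} (h : Piece p c d s) (x : ℝ) : p x ≤ s * max (x - c) 0 := by
  rcases le_total x c with hx | hx
  · rw [max_eq_right (by linarith), mul_zero, h.zero x hx]
  · rw [max_eq_left (by linarith)]
    have := (abs_le.mp (h.lip x c)).2
    rw [h.zero c le_rfl, abs_of_nonneg (by linarith : 0 ≤ x - c)] at this
    linarith

lemma Piece.shift {p : ℝ → ℝ} {c d s : ℝ} (h : Piece p c d s) (y : ℝ) :
    Piece (fun x => p (x - y)) (c + y) (d + y) s where
  hcd := by linarith [h.hcd]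
  hs := h.hs
  cvx := convexOn_of_subgrad (fun x => rd p (x - y)) (fun x z => by
    have := rd_sub h.cvx (x - y) (z - y)
    have e : z - y - (x - y) = z - x := by ring
    rwa [e] at this)
  zero := fun x hx => h.zero _ (by linarith)
  aff := fun x hx => by
    rw [h.aff (x - y) (by linarith)]
    have e : d + y - y = d := by ring
    rw [e]; ring
  nonneg := fun x => h.nonneg _
  lip := fun x z => by
    have := h.lip (x - y) (z - y)
    have e : x - y - (z - y) = x - z := by ring
    rwa [e] at this

lemma trunc_piece {f : ℝ → ℝ} (hf : ConvexOn ℝ Set.univ f) {c d : ℝ} (hcd : c ≤ d) :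
    Piece (trunc f c d) c d (rd f d - rd f c) := by
  have hmono := rd_mono hf
  have hzero : ∀ x, x ≤ c → trunc f c d x = 0 := fun x hx => by
    unfold trunc; rw [Dext_le hx, Dext_le (hx.trans hcd)]; ring
  have hmid : ∀ x, c ≤ x → x ≤ d → trunc f c d x = f x - f c - rd f c * (x - c) := by
    intro x h1 h2
    unfold trunc; rw [Dext_ge h1, Dext_le h2]; ring
  have hr : ∀ x, d ≤ x → trunc f c d x =
      f d + rd f d * (x - d) - f c - rd f c * (x - c) := by
    intro x h1
    unfold trunc; rw [Dext_ge h1, Dext_ge (hcd.trans h1)]; ring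
  have hs : 0 ≤ rd f d - rd f c := sub_nonneg.mpr (hmono hcd)
  have hsub : ∀ x y, trunc f c d x + (rd f (cl c d x) - rd f c) * (y - x) ≤ trunc f c d y := by
    intro x y
    rcases le_total x c with hx | hx
    · rw [cl_of_le hcd hx, hzero x hx]
      rcases le_total y c with hy | hy
      · rw [hzero y hy]; simp
      rcases le_total y d with hy' | hy'
      · rw [hmid y hy hy']
        have := rd_sub hf c y
        linarith
      · rw [hr y hy']
        have := rd_sub hf c d
        nlinarith
    rcases le_total x d with hx' | hx'
    · rw [cl_of_mem ⟨hx, hx'⟩, hmid x hx hx']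
      have hm1 := hmono hx
      have hm2 := hmono hx'
      rcases le_total y c with hy | hy
      · rw [hzero y hy]
        have := rd_sub hf x c
        nlinarith
      rcases le_total y d with hy' | hy'
      · rw [hmid y hy hy']
        have := rd_sub hf x y
        linarith
      · rw [hr y hy']
        have := rd_sub hf x d
        nlinarith
    · rw [cl_of_ge hcd hx', hr x hx']
      rcases le_total y c with hy | hy
      · rw [hzero y hy]
        have := rd_sub hf d c
        nlinarith
      rcases le_total y d with hy' | hy'
      · rw [hmid y hy hy']
        have := rd_sub hf d y
        linarith
      · rw [hr y hy']
        nlinarith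
  have hm0 : ∀ x, 0 ≤ rd f (cl c d x) - rd f c := fun x =>
    sub_nonneg.mpr (hmono (cl_mem hcd x).1)
  have hm1 : ∀ x, rd f (cl c d x) - rd f c ≤ rd f d - rd f c := fun x => by
    have := hmono (cl_mem hcd x).2
    linarith
  refine ⟨hcd, hs, convexOn_of_subgrad _ hsub, hzero, ?_, ?_, ?_⟩
  · intro x hx
    rw [hr x hx, hr d le_rfl]; ring
  · intro x
    have h1 := hsub c x
    rw [hzero c le_rfl, cl_of_le hcd le_rfl] at h1
    linarith
  · have key : ∀ x y, trunc f c d x - trunc f c d y ≤ (rd f d - rd f c) * |x - y| := by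
      intro x y
      have h1 := hsub x y
      have h2 := hm0 x
      have h3 := hm1 x
      have h4 : (rd f (cl c d x) - rd f c) * (x - y) ≤
          (rd f (cl c d x) - rd f c) * |x - y| :=
        mul_le_mul_of_nonneg_left (le_abs_self _) h2
      have h5 := mul_le_mul_of_nonneg_right h3 (abs_nonneg (x - y))
      linarith
    intro x y
    rw [abs_le]
    have h1 := key x y
    have h2 := key y x
    rw [abs_sub_comm] at h2
    constructor <;> linarith

lemma trunc_mid {f : ℝ → ℝ} {c d x : ℝ} (h : x ∈ Set.Icc c d) :
    trunc f c d x = f x - f c - rd f c * (x - c) := by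
  unfold trunc; rw [Dext_ge h.1, Dext_le h.2]; ring

lemma rd_eq_of_hasDeriv {f : ℝ → ℝ} {x m : ℝ} (h : HasDerivAt f m x) : rd f x = m :=
  h.hasDerivWithinAt.derivWithin (uniqueDiffWithinAt_Ioi x)

lemma quad_hasDeriv (σ c x : ℝ) : HasDerivAt (fun x => σ * (x - c) ^ 2 / 2) (σ * (x - c)) x := by
  have h1 : HasDerivAt (fun x => (x - c) ^ 2) (2 * (x - c)) x := by
    have := ((hasDerivAt_id' x).sub_const c).fun_pow 2
    simpa using this
  have h2 := (h1.const_mul σ).div_const 2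
  have e : σ * (2 * (x - c)) / 2 = σ * (x - c) := by ring
  rwa [e] at h2

lemma quad_rd (σ c x : ℝ) : rd (fun x => σ * (x - c) ^ 2 / 2) x = σ * (x - c) :=
  rd_eq_of_hasDeriv (quad_hasDeriv σ c x)

lemma quad_cvx {σ : ℝ} (hσ : 0 ≤ σ) (c : ℝ) :
    ConvexOn ℝ Set.univ (fun x => σ * (x - c) ^ 2 / 2) :=
  convexOn_of_subgrad (fun x => σ * (x - c)) (fun x y => by
    nlinarith [mul_nonneg hσ (sq_nonneg (y - x))])

lemma add_aff_cvx {f : ℝ → ℝ} (hf : ConvexOn ℝ Set.univ f) (α β : ℝ) :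
    ConvexOn ℝ Set.univ (fun x => f x + (α * x + β)) :=
  convexOn_of_subgrad (fun x => rd f x + α) (fun x y => by
    have := rd_sub hf x y
    linarith)

lemma zero_cvx : ConvexOn ℝ Set.univ (fun _ : ℝ => (0 : ℝ)) :=
  convexOn_of_subgrad (fun _ => 0) (fun x y => by simp)

lemma mkf_min {f : ℝ → ℝ} {a b c : ℝ} (h1 : a ≤ c) (h2 : c ≤ b) :
    (fun x => min (mkf f a c x) (mkf f c b x)) = mkf f a b := by
  ext1 x
  by_cases ha : x ∈ Set.Icc a c
  · have hx : x ∈ Set.Icc a b := ⟨ha.1, ha.2.trans h2⟩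
    rw [mkf_mem ha, mkf_mem hx]
    exact min_eq_left (le_mkf _ _ _ _)
  · rw [mkf_notMem ha, min_eq_right le_top]
    by_cases hb : x ∈ Set.Icc c b
    · have hx : x ∈ Set.Icc a b := ⟨h1.trans hb.1, hb.2⟩
      rw [mkf_mem hb, mkf_mem hx]
    · rw [mkf_notMem hb, mkf_notMem]
      rintro ⟨h3, h4⟩
      rcases le_total x c with h | h
      · exact ha ⟨h3, h⟩
      · exact hb ⟨h, h4⟩

lemma mkf_max {f : ℝ → ℝ} {a b c : ℝ} (h1 : a ≤ c) (h2 : c ≤ b) :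
    (fun x => max (mkf f a c x) (mkf f c b x)) = mkf f c c := by
  ext1 x
  by_cases ha : x ∈ Set.Icc a c
  · by_cases hb : x ∈ Set.Icc c b
    · rw [mkf_mem ha, mkf_mem hb, mkf_mem ⟨hb.1, ha.2⟩, max_self]
    · rw [mkf_notMem hb, max_eq_right le_top, mkf_notMem]
      exact fun h => hb ⟨h.1, h.2.trans h2⟩
  · rw [mkf_notMem ha, max_eq_left le_top, mkf_notMem]
    exact fun h => ha ⟨h1.trans h.1, h.2⟩

lemma mkf_zero_eq (a b : ℝ) : mkf (fun _ => 0) a b = eIndicator (Set.Icc a b) := by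
  ext1 x
  unfold mkf eIndicator
  split_ifs <;> simp

section good
variable {ζ : ℝ → ℝ} {Z : (ℝ → EReal) → ℝ}

lemma gv_pt (hZ : GoodVal ζ Z) {f : ℝ → ℝ} (hf : ConvexOn ℝ Set.univ f) (a : ℝ) :
    Z (mkf f a a) = 0 :=
  hZ.2.2.2.2.1 _ (isLC_mkf hf le_rfl) ⟨a, by rw [edom_mkf, Set.Icc_self]⟩

lemma gv_cut (hZ : GoodVal ζ Z) {f : ℝ → ℝ} (hf : ConvexOn ℝ Set.univ f) {a b c : ℝ}
    (h1 : a ≤ c) (h2 : c ≤ b) : Z (mkf f a b) = Z (mkf f a c) + Z (mkf f c b) := by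
  have := hZ.2.1 (mkf f a c) (mkf f c b) (isLC_mkf hf h1) (isLC_mkf hf h2)
    (by rw [mkf_min h1 h2]; exact isLC_mkf hf (h1.trans h2))
  rw [mkf_min h1 h2, mkf_max h1 h2, gv_pt hZ hf] at this
  linarith

lemma gv_move (hZ : GoodVal ζ Z) {f g : ℝ → ℝ} (hf : ConvexOn ℝ Set.univ f) {c d : ℝ}
    (hcd : c ≤ d) (y α β : ℝ) (h : ∀ x ∈ Set.Icc c d, g (x + y) = f x + (α * x + β)) :
    Z (mkf g (c + y) (d + y)) = Z (mkf f c d) := by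
  have e1 : (fun x => mkf f c d x + (((α • LinearMap.id : ℝ →ₗ[ℝ] ℝ) x + β : ℝ) : EReal)) =
      mkf (fun x => f x + (α * x + β)) c d := by
    ext1 x
    by_cases hx : x ∈ Set.Icc c d
    · rw [mkf_mem hx, mkf_mem hx, ← EReal.coe_add]; simp
    · rw [mkf_notMem hx, mkf_notMem hx, EReal.top_add_coe]
  have e2 : (fun x => mkf (fun x => f x + (α * x + β)) c d (x - y)) = mkf g (c + y) (d + y) := by
    ext1 x
    by_cases hx : x ∈ Set.Icc (c + y) (d + y)
    · have hx' : x - y ∈ Set.Icc c d := ⟨by linarith [hx.1], by linarith [hx.2]⟩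
      rw [mkf_mem hx, mkf_mem hx', ← h _ hx', sub_add_cancel]
    · rw [mkf_notMem hx, mkf_notMem]
      exact fun h' => hx ⟨by linarith [h'.1], by linarith [h'.2]⟩
  have h1 := hZ.2.2.2.1 (mkf f c d) (isLC_mkf hf hcd) (α • LinearMap.id) β
  have h2 := hZ.2.2.1 _ (isLC_mkf (add_aff_cvx hf α β) hcd) y
  rw [e1] at h1
  rw [e2, h1] at h2
  exact h2

lemma gv_move0 (hZ : GoodVal ζ Z) {f g : ℝ → ℝ} (hf : ConvexOn ℝ Set.univ f) {c d : ℝ}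
    (hcd : c ≤ d) (α β : ℝ) (h : ∀ x ∈ Set.Icc c d, g x = f x + (α * x + β)) :
    Z (mkf g c d) = Z (mkf f c d) := by
  have := gv_move hZ hf hcd 0 α β (g := g) (by simpa using h)
  simpa using this

lemma gv_sum (hZ : GoodVal ζ Z) {f : ℝ → ℝ} (hf : ConvexOn ℝ Set.univ f) (a : ℝ) {l : ℝ}
    (hl : 0 ≤ l) (N : ℕ) : Z (mkf f a (a + N * l)) =
      ∑ i ∈ Finset.range N, Z (mkf f (a + i * l) (a + (i + 1) * l)) := by
  induction N with
  | zero => simp [gv_pt hZ hf]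
  | succ n ih =>
    rw [Finset.sum_range_succ, ← ih]
    push_cast
    have : (0:ℝ) ≤ n * l := by positivity
    exact gv_cut hZ hf (by linarith) (by nlinarith)

lemma gv_aff (hZ : GoodVal ζ Z) {g : ℝ → ℝ} {c d : ℝ} (hcd : c ≤ d) (α β : ℝ)
    (h : ∀ x ∈ Set.Icc c d, g x = α * x + β) : Z (mkf g c d) = 0 := by
  rw [gv_move0 hZ zero_cvx hcd α β (by simpa using h), mkf_zero_eq]
  exact hZ.2.2.2.2.2.1 c d hcd

lemma gv_quad (hζ : IsConc ζ) (hZ : GoodVal ζ Z) {g : ℝ → ℝ} {c d σ : ℝ} (hcd : c < d)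
    (hσ : 0 ≤ σ) (α β : ℝ)
    (h : ∀ x ∈ Set.Icc c d, g x = σ * (x - c) ^ 2 / 2 + (α * x + β)) :
    Z (mkf g c d) = (d - c) * ζ σ := by
  rcases hσ.eq_or_lt with h0 | hpos
  · subst h0
    rw [conc_zero hζ, gv_aff hZ hcd.le α β (fun x hx => by rw [h x hx]; ring), mul_zero]
  · have hm : 0 < (d - c) / 2 := by linarith
    have h1 := hZ.2.2.2.2.2.2 σ ((d - c) / 2) hpos hm
    have e1 : (fun x => ((σ * (x ^ 2 / 2) : ℝ) : EReal) +
        eIndicator (Set.Icc (-((d - c) / 2)) ((d - c) / 2)) x) =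
        mkf (fun x => σ * (x - 0) ^ 2 / 2) (-((d - c) / 2)) ((d - c) / 2) := by
      ext1 x
      unfold mkf eIndicator
      split_ifs
      · rw [add_zero]; congr 1; ring
      · rw [EReal.coe_add_top]
    rw [e1] at h1
    have h2 := gv_move hZ (quad_cvx hσ 0) (c := -((d - c) / 2)) (d := (d - c) / 2) (by linarith)
      ((d + c) / 2) (σ * ((d - c) / 2) + α)
      (σ * ((d - c) / 2) ^ 2 / 2 + α * ((d + c) / 2) + β) (g := g) (fun x hx => by
        rw [h _ ⟨by linarith [hx.1], by linarith [hx.2]⟩]; ring)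
    have e2 : -((d - c) / 2) + (d + c) / 2 = c := by ring
    have e3 : (d - c) / 2 + (d + c) / 2 = d := by ring
    rw [e2, e3, h1] at h2
    rw [h2]; ring

lemma gv_usc (hZ : GoodVal ζ Z) {uk : ℕ → ℝ → EReal} {u : ℝ → EReal} (h : TauConv uk u)
    {B δ : ℝ} (hB : ∀ k, Z (uk k) ≤ B) (hδ : ∃ᶠ k in atTop, δ ≤ Z (uk k)) : δ ≤ Z u :=
  (le_limsup_of_frequently_le hδ ⟨B, by simpa using ⟨0, fun k _ => hB k⟩⟩).trans (hZ.1 uk u h)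

lemma gv_trunc (hZ : GoodVal ζ Z) {f : ℝ → ℝ} (hf : ConvexOn ℝ Set.univ f) {c d : ℝ}
    (hcd : c ≤ d) : Z (mkf (trunc f c d) c d) = Z (mkf f c d) :=
  gv_move0 hZ hf hcd (-rd f c) (rd f c * c - f c) (fun x hx => by
    rw [trunc_mid hx]; ring)

/-- `p i` are pieces on consecutive cells. -/
def Cells (p : ℕ → ℝ → ℝ) (a l : ℝ) (s : ℕ → ℝ) : Prop :=
  ∀ i : ℕ, Piece (p i) (a + i * l) (a + (i + 1) * l) (s i)

lemma Cells.cvx {p : ℕ → ℝ → ℝ} {a l : ℝ} {s : ℕ → ℝ} (h : Cells p a l s) (α β : ℝ) (N : ℕ) :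
    ConvexOn ℝ Set.univ (fun x => ∑ i ∈ Finset.range N, p i x + (α * x + β)) := by
  refine convexOn_of_subgrad (fun x => ∑ i ∈ Finset.range N, rd (p i) x + α) (fun x y => ?_)
  have := Finset.sum_le_sum (s := Finset.range N) (fun i _ => rd_sub (h i).cvx x y)
  rw [Finset.sum_add_distrib, ← Finset.sum_mul] at this
  linarith

lemma Cells.lip {p : ℕ → ℝ → ℝ} {a l : ℝ} {s : ℕ → ℝ} (h : Cells p a l s) (α β : ℝ) (N : ℕ)
    (x y : ℝ) : |(∑ i ∈ Finset.range N, p i x + (α * x + β)) -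
      (∑ i ∈ Finset.range N, p i y + (α * y + β))| ≤
      (∑ i ∈ Finset.range N, s i + |α|) * |x - y| := by
  have e : (∑ i ∈ Finset.range N, p i x + (α * x + β)) -
      (∑ i ∈ Finset.range N, p i y + (α * y + β)) =
      ∑ i ∈ Finset.range N, (p i x - p i y) + α * (x - y) := by
    rw [Finset.sum_sub_distrib]; ring
  rw [e, add_mul, Finset.sum_mul, ← abs_mul]
  refine (abs_add_le _ _).trans (add_le_add ?_ le_rfl)
  exact (Finset.abs_sum_le_sum_abs _ _).trans (Finset.sum_le_sum fun i _ => (h i).lip x y)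

lemma Cells.cmp {p q : ℕ → ℝ → ℝ} {a l : ℝ} {s : ℕ → ℝ} (hl : 0 ≤ l) (h : Cells p a l s)
    (h' : Cells q a l s) (N : ℕ) (x : ℝ) :
    |∑ i ∈ Finset.range N, p i x - ∑ i ∈ Finset.range N, q i x| ≤
      l * ∑ i ∈ Finset.range N, s i := by
  rw [← Finset.sum_sub_distrib, Finset.mul_sum]
  refine (Finset.abs_sum_le_sum_abs _ _).trans (Finset.sum_le_sum fun i _ => ?_)
  have h1 := (h i).lo x
  have h2 := (h i).hi x
  have h3 := (h' i).lo x
  have h4 := (h' i).hi x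
  have h5 : max (x - (a + i * l)) 0 ≤ max (x - (a + (i + 1) * l)) 0 + l := by
    apply max_le
    · have := le_max_left (x - (a + (i + 1) * l)) 0
      linarith
    · have := le_max_right (x - (a + (i + 1) * l)) 0
      linarith
  have h6 := mul_le_mul_of_nonneg_left h5 (h i).hs
  rw [abs_le]
  constructor <;> nlinarith

lemma Cells.on_cell {p : ℕ → ℝ → ℝ} {a l : ℝ} {s : ℕ → ℝ} (hl : 0 ≤ l) (h : Cells p a l s)
    (j N : ℕ) : ∃ α β : ℝ, ∀ x ∈ Set.Icc (a + j * l) (a + (j + 1) * l),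
      ∑ i ∈ Finset.range N, p i x = (if j < N then p j x else 0) + (α * x + β) := by
  induction N with
  | zero => exact ⟨0, 0, fun x _ => by simp⟩
  | succ n ih =>
    obtain ⟨α, β, hαβ⟩ := ih
    rcases lt_trichotomy n j with hn | hn | hn
    · refine ⟨α + s n, β + (p n (a + (n + 1) * l) - s n * (a + (n + 1) * l)), fun x hx => ?_⟩
      have hnj : ((n : ℝ) + 1) ≤ j := by exact_mod_cast hn
      rw [Finset.sum_range_succ, hαβ x hx, (h n).aff x (by nlinarith [hx.1]), if_neg (by omega),
        if_neg (by omega)]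
      ring
    · subst hn
      refine ⟨α, β, fun x hx => ?_⟩
      rw [Finset.sum_range_succ, hαβ x hx, if_neg (by omega), if_pos (by omega)]
      ring
    · refine ⟨α, β, fun x hx => ?_⟩
      have hnj : ((j : ℝ) + 1) ≤ n := by exact_mod_cast hn
      rw [Finset.sum_range_succ, hαβ x hx, (h n).zero x (by nlinarith [hx.2]), if_pos (by omega),
        if_pos (by omega)]
      ring

lemma Cells.val (hZ : GoodVal ζ Z) {p : ℕ → ℝ → ℝ} {a l : ℝ} {s : ℕ → ℝ} (hl : 0 ≤ l)
    (h : Cells p a l s) (α β : ℝ) (N : ℕ) :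
    Z (mkf (fun x => ∑ i ∈ Finset.range N, p i x + (α * x + β)) a (a + N * l)) =
      ∑ i ∈ Finset.range N, Z (mkf (p i) (a + i * l) (a + (i + 1) * l)) := by
  rw [gv_sum hZ (h.cvx α β N) a hl N]
  refine Finset.sum_congr rfl fun j hj => ?_
  obtain ⟨α', β', h'⟩ := h.on_cell hl j N
  refine gv_move0 hZ (h j).cvx (by nlinarith) (α' + α) (β' + β) fun x hx => ?_
  rw [h' x hx, if_pos (Finset.mem_range.mp hj)]
  ring

end good

/-- Slope increment of `f` over cell `i`. -/
def sl (f : ℝ → ℝ) (a l : ℝ) (i : ℕ) : ℝ := rd f (a + (i + 1) * l) - rd f (a + i * l)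

lemma sl_nonneg {f : ℝ → ℝ} (hf : ConvexOn ℝ Set.univ f) (a : ℝ) {l : ℝ} (hl : 0 ≤ l) (i : ℕ) :
    0 ≤ sl f a l i := sub_nonneg.mpr (rd_mono hf (by nlinarith))

lemma sl_sum (f : ℝ → ℝ) (a l : ℝ) (N : ℕ) :
    ∑ i ∈ Finset.range N, sl f a l i = rd f (a + N * l) - rd f a := by
  have := Finset.sum_range_sub (fun i : ℕ => rd f (a + i * l)) N
  push_cast at this
  simpa [sl] using this

lemma trunc_cells {f : ℝ → ℝ} (hf : ConvexOn ℝ Set.univ f) (a : ℝ) {l : ℝ} (hl : 0 ≤ l) :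
    Cells (fun i => trunc f (a + i * l) (a + (i + 1) * l)) a l (sl f a l) :=
  fun i => trunc_piece hf (by nlinarith)

lemma trunc_sum {f : ℝ → ℝ} (a l : ℝ) (N : ℕ) {x : ℝ} (hx : x ∈ Set.Icc a (a + N * l)) :
    ∑ i ∈ Finset.range N, trunc f (a + i * l) (a + (i + 1) * l) x +
      (rd f a * x + (f a - rd f a * a)) = f x := by
  have := Finset.sum_range_sub (fun i : ℕ => Dext f (a + i * l) x) N
  push_cast at this
  unfold trunc
  rw [this, Dext_le hx.2, zero_mul, add_zero, Dext_ge hx.1]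
  ring

/-- Quadratic cells with prescribed slopes. -/
def qc (a l : ℝ) (s : ℕ → ℝ) (i : ℕ) : ℝ → ℝ :=
  trunc (fun x => s i / l * (x - (a + i * l)) ^ 2 / 2) (a + i * l) (a + (i + 1) * l)

lemma qc_cells (a : ℝ) {l : ℝ} (hl : 0 < l) (s : ℕ → ℝ) (hs : ∀ i, 0 ≤ s i) :
    Cells (qc a l s) a l s := by
  intro i
  have h := trunc_piece (quad_cvx (div_nonneg (hs i) hl.le) (a + i * l))
    (c := a + i * l) (d := a + (i + 1) * l) (by nlinarith)
  rw [quad_rd, quad_rd] at h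
  have e : s i / l * (a + (i + 1) * l - (a + i * l)) - s i / l * (a + i * l - (a + i * l)) = s i := by
    field_simp; ring
  rw [e] at h
  exact h

section good
variable {ζ : ℝ → ℝ} {Z : (ℝ → EReal) → ℝ}

lemma qc_val (hζ : IsConc ζ) (hZ : GoodVal ζ Z) (a : ℝ) {l : ℝ} (hl : 0 < l) (s : ℕ → ℝ)
    (hs : ∀ i, 0 ≤ s i) (i : ℕ) :
    Z (mkf (qc a l s i) (a + i * l) (a + (i + 1) * l)) = l * ζ (s i / l) := by
  have hlt : a + i * l < a + (i + 1) * l := by nlinarith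
  unfold qc
  rw [gv_trunc hZ (quad_cvx (div_nonneg (hs i) hl.le) _) hlt.le,
    gv_quad hζ hZ hlt (div_nonneg (hs i) hl.le) 0 0 (fun x _ => by ring)]
  congr 1
  ring

/-- Riemann type sum. -/
def RS (ζ f : ℝ → ℝ) (a l : ℝ) (N : ℕ) : ℝ :=
  ∑ i ∈ Finset.range N, l * ζ (sl f a l i / l)

lemma gv_lb (hζ : IsConc ζ) (hZ : GoodVal ζ Z) {f : ℝ → ℝ} (hf : ConvexOn ℝ Set.univ f)
    {a b c : ℝ} (hab : a < b) (hc : ∀ N : ℕ, 0 < N → c ≤ RS ζ f a ((b - a) / N) N) :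
    c ≤ Z (mkf f a b) := by
  set l : ℕ → ℝ := fun k => (b - a) / ((k + 1 : ℕ) : ℝ) with hl
  have hlpos : ∀ k, 0 < l k := fun k => by
    have : 0 < b - a := by linarith
    simp only [hl]; positivity
  have hNl : ∀ k : ℕ, a + ((k + 1 : ℕ) : ℝ) * l k = b := fun k => by
    have : ((k + 1 : ℕ) : ℝ) ≠ 0 := by positivity
    simp only [hl]; field_simp; ring
  have hl0 : Tendsto l atTop (𝓝 0) := by
    have := tendsto_const_div_atTop_nhds_zero_nat (b - a)
    exact this.comp (tendsto_add_atTop_nat 1)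
  set W : ℕ → ℝ → ℝ := fun k x =>
    ∑ i ∈ Finset.range (k + 1), qc a (l k) (sl f a (l k)) i x + (rd f a * x + (f a - rd f a * a))
    with hW
  have hs : ∀ k i, 0 ≤ sl f a (l k) i := fun k i => sl_nonneg hf a (hlpos k).le i
  have hcell := fun k => qc_cells a (hlpos k) _ (hs k)
  have hsum : ∀ k, ∑ i ∈ Finset.range (k + 1), sl f a (l k) i = rd f b - rd f a := fun k => by
    rw [sl_sum, hNl]
  have hS : 0 ≤ rd f b - rd f a := sub_nonneg.mpr (rd_mono hf hab.le)
  have hconv : TauConv (fun k => mkf (W k) a b) (mkf f a b) := by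
    refine tauConv_mkf W f (fun _ => a) (fun _ => b) a b (rd f b - rd f a + |rd f a| + 1)
      (fun k => (hcell k).cvx _ _ _) hf (fun _ => hab.le) hab.le tendsto_const_nhds
      tendsto_const_nhds (by positivity) ?_ (fun k => l k * (rd f b - rd f a)) ?_ ?_
    · intro k x _ y _
      refine ((hcell k).lip _ _ _ x y).trans ?_
      rw [hsum]
      exact mul_le_mul_of_nonneg_right (by linarith) (abs_nonneg _)
    · simpa using hl0.mul_const (rd f b - rd f a)
    · intro k x hx
      have h1 := (hcell k).cmp (hlpos k).le (trunc_cells hf a (hlpos k).le) (k + 1) x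
      have h2 := trunc_sum (f := f) a (l k) (k + 1) (x := x) (by rw [hNl]; exact hx)
      rw [hsum] at h1
      rw [← h2]
      simp only [hW, add_sub_add_right_eq_sub]
      exact h1
  have hval : ∀ k, Z (mkf (W k) a b) = RS ζ f a (l k) (k + 1) := fun k => by
    have := (hcell k).val hZ (hlpos k).le (rd f a) (f a - rd f a * a) (k + 1)
    rw [hNl] at this
    rw [this]
    exact Finset.sum_congr rfl fun i _ => qc_val hζ hZ a (hlpos k) _ (hs k) i
  refine gv_usc hZ hconv (B := ζ 1 * ((b - a) + (rd f b - rd f a))) ?_ ?_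
  · intro k
    rw [hval]
    have h1 : RS ζ f a (l k) (k + 1) ≤
        ∑ i ∈ Finset.range (k + 1), ζ 1 * (l k + sl f a (l k) i) := by
      refine Finset.sum_le_sum fun i _ => ?_
      have := conc_lin hζ (div_nonneg (hs k i) (hlpos k).le)
      calc l k * ζ (sl f a (l k) i / l k) ≤ l k * (ζ 1 * (1 + sl f a (l k) i / l k)) :=
            mul_le_mul_of_nonneg_left this (hlpos k).le
        _ = ζ 1 * (l k + sl f a (l k) i) := by
            have := (hlpos k).ne'
            field_simp
    rw [← Finset.mul_sum, Finset.sum_add_distrib, hsum, Finset.sum_const, Finset.card_range,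
      nsmul_eq_mul] at h1
    have := hNl k
    have e : ((k + 1 : ℕ) : ℝ) * l k = b - a := by linarith
    rwa [e] at h1
  · refine Frequently.of_forall fun k => ?_
    rw [hval]
    exact hc (k + 1) (Nat.succ_pos k)

lemma gv_nonneg (hζ : IsConc ζ) (hZ : GoodVal ζ Z) {f : ℝ → ℝ} (hf : ConvexOn ℝ Set.univ f)
    {a b : ℝ} (hab : a ≤ b) : 0 ≤ Z (mkf f a b) := by
  rcases hab.eq_or_lt with h | h
  · subst h; rw [gv_pt hZ hf]
  · refine gv_lb hζ hZ hf h fun N hN => Finset.sum_nonneg fun i _ => ?_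
    have hl : 0 ≤ (b - a) / N := div_nonneg (by linarith) (Nat.cast_nonneg _)
    exact mul_nonneg hl (conc_nonneg hζ (div_nonneg (sl_nonneg hf a hl i) hl))

end good

lemma qp_hi (y l : ℝ) (hl : 0 ≤ l) :
    l * max y 0 ≤ (max (y + l) 0) ^ 2 / 2 - (max y 0) ^ 2 / 2 := by
  rcases le_total y 0 with h | h
  · rw [max_eq_right h]
    have := sq_nonneg (max (y + l) 0)
    simp; linarith
  · rw [max_eq_left h, max_eq_left (by linarith)]; nlinarith

lemma qp_lo (y l : ℝ) (hl : 0 ≤ l) :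
    (max y 0) ^ 2 / 2 - (max (y - l) 0) ^ 2 / 2 ≤ l * max y 0 := by
  rcases le_total y 0 with h | h
  · rw [max_eq_right h]
    have := sq_nonneg (max (y - l) 0)
    simp; linarith
  · rw [max_eq_left h]
    rcases le_total y l with h' | h'
    · rw [max_eq_right (by linarith)]; nlinarith
    · rw [max_eq_left (by linarith)]; nlinarith

lemma repl_bound {p : ℝ → ℝ} {l s : ℝ} (hl : 0 < l) (h : Piece p 0 l s) (n : ℕ) (hn : 0 < n)
    {x : ℝ} (hx : x ∈ Set.Icc 0 (n * l)) :
    |∑ i ∈ Finset.range n, p (x - i * l) - s / l * (x ^ 2 / 2)| ≤ 2 * (n * s) * l := by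
  have hσ : 0 ≤ s / l := div_nonneg h.hs hl.le
  have hsl : s = s / l * l := by field_simp
  have hup : ∑ i ∈ Finset.range n, p (x - i * l) ≤ s / l * ((x + l) ^ 2 / 2) := by
    have h1 : ∀ i ∈ Finset.range n, p (x - i * l) ≤ s / l *
        (-((max (x + l - ((i + 1 : ℕ) : ℝ) * l) 0) ^ 2 / 2) -
          -((max (x + l - (i : ℝ) * l) 0) ^ 2 / 2)) := by
      intro i _
      have h2 := h.hi (x - i * l)
      have h3 := mul_le_mul_of_nonneg_left (qp_hi (x - i * l) l hl.le) hσ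
      rw [← mul_assoc, ← hsl] at h3
      have e1 : x + l - ((i + 1 : ℕ) : ℝ) * l = x - i * l := by push_cast; ring
      have e2 : x + l - (i : ℝ) * l = x - i * l + l := by ring
      rw [e1, e2]
      rw [sub_zero] at h2
      linarith
    have h2 := Finset.sum_le_sum h1
    rw [← Finset.mul_sum,
      Finset.sum_range_sub (fun i : ℕ => -((max (x + l - (i : ℝ) * l) 0) ^ 2 / 2)) n] at h2
    refine h2.trans (mul_le_mul_of_nonneg_left ?_ hσ)
    simp only [Nat.cast_zero, zero_mul, sub_zero]
    rw [max_eq_left (by linarith [hx.1] : 0 ≤ x + l)]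
    have := sq_nonneg (max (x + l - n * l) 0)
    linarith
  have hlo : s / l * ((max (x - l) 0) ^ 2 / 2) ≤ ∑ i ∈ Finset.range n, p (x - i * l) := by
    have h1 : ∀ i ∈ Finset.range n, s / l *
        (-((max (x - l - ((i + 1 : ℕ) : ℝ) * l) 0) ^ 2 / 2) -
          -((max (x - l - (i : ℝ) * l) 0) ^ 2 / 2)) ≤ p (x - i * l) := by
      intro i _
      have h2 := h.lo (x - i * l)
      have h3 := mul_le_mul_of_nonneg_left (qp_lo (x - i * l - l) l hl.le) hσ
      rw [← mul_assoc, ← hsl] at h3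
      have e1 : x - l - ((i + 1 : ℕ) : ℝ) * l = x - i * l - l - l := by push_cast; ring
      have e2 : x - l - (i : ℝ) * l = x - i * l - l := by ring
      rw [e1, e2]
      linarith
    have h2 := Finset.sum_le_sum h1
    rw [← Finset.mul_sum,
      Finset.sum_range_sub (fun i : ℕ => -((max (x - l - (i : ℝ) * l) 0) ^ 2 / 2)) n] at h2
    refine le_trans (le_of_eq ?_) h2
    rw [max_eq_right (by linarith [hx.2] : x - l - n * l ≤ 0)]
    simp
  have hn1 : (1 : ℝ) ≤ n := by exact_mod_cast hn
  have e1 : s / l * ((x + l) ^ 2 / 2) - s / l * (x ^ 2 / 2) ≤ 2 * (n * s) * l := by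
    have e : s / l * ((x + l) ^ 2 / 2) - s / l * (x ^ 2 / 2) = s * x + s * l / 2 := by
      field_simp; ring
    rw [e]
    have h1 : s * x ≤ s * (n * l) := mul_le_mul_of_nonneg_left hx.2 h.hs
    have h2 : s * l * 1 ≤ s * l * n := mul_le_mul_of_nonneg_left hn1 (mul_nonneg h.hs hl.le)
    have h3 := mul_nonneg h.hs hl.le
    nlinarith
  have e2 : s / l * (x ^ 2 / 2) - s / l * ((max (x - l) 0) ^ 2 / 2) ≤ 2 * (n * s) * l := by
    have h3 := mul_le_mul_of_nonneg_left (qp_lo x l hl.le) hσ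
    rw [← mul_assoc, ← hsl, max_eq_left hx.1] at h3
    have h1 : s * x ≤ s * (n * l) := mul_le_mul_of_nonneg_left hx.2 h.hs
    have h4 : 0 ≤ s * (n * l) := mul_nonneg h.hs (by positivity)
    linarith
  rw [abs_le]
  constructor <;> linarith

section good
variable {ζ : ℝ → ℝ} {Z : (ℝ → EReal) → ℝ}

lemma repl (hZ : GoodVal ζ Z) {f : ℝ → ℝ} (hf : ConvexOn ℝ Set.univ f) (c : ℝ) {l : ℝ}
    (hl : 0 < l) (n : ℕ) (hn : 0 < n) : ∃ W : ℝ → ℝ, ConvexOn ℝ Set.univ W ∧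
      (∀ x y, |W x - W y| ≤ (n * (rd f (c + l) - rd f c)) * |x - y|) ∧
      Z (mkf W 0 (n * l)) = n * Z (mkf f c (c + l)) ∧
      ∀ x ∈ Set.Icc 0 (n * l), |W x - (rd f (c + l) - rd f c) / l * (x ^ 2 / 2)| ≤
        2 * (n * (rd f (c + l) - rd f c)) * l := by
  have hcd : c ≤ c + l := by linarith
  have hT := trunc_piece hf hcd
  have hp : Piece (fun x => trunc f c (c + l) (x - -c)) 0 l (rd f (c + l) - rd f c) := by
    have := hT.shift (-c)
    have e1 : c + -c = 0 := by ring
    have e2 : c + l + -c = l := by ring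
    rwa [e1, e2] at this
  have hcell : Cells (fun i x => trunc f c (c + l) (x - i * l - -c)) 0 l
      (fun _ => rd f (c + l) - rd f c) := by
    intro i
    have := hp.shift (i * l)
    have e2 : l + i * l = 0 + (i + 1) * l := by ring
    rwa [e2] at this
  refine ⟨fun x => ∑ i ∈ Finset.range n, trunc f c (c + l) (x - i * l - -c) + (0 * x + 0),
    hcell.cvx 0 0 n, ?_, ?_, ?_⟩
  · intro x y
    have := hcell.lip 0 0 n x y
    rw [Finset.sum_const, Finset.card_range, nsmul_eq_mul, abs_zero,
      add_zero (_ * (_ - _))] at this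
    exact this
  · have := hcell.val hZ hl.le 0 0 n
    rw [zero_add] at this
    rw [this]
    have h1 : ∀ i ∈ Finset.range n,
        Z (mkf (fun x => trunc f c (c + l) (x - i * l - -c)) (0 + i * l) (0 + (i + 1) * l)) =
          Z (mkf f c (c + l)) := by
      intro i _
      rw [← gv_trunc hZ hf hcd]
      have := gv_move hZ hT.cvx hcd (i * l - c) 0 0
        (g := fun x => trunc f c (c + l) (x - i * l - -c)) (fun x _ => by
          have e : x + (i * l - c) - i * l - -c = x := by ring
          rw [e]; ring)
      have e1 : c + (i * l - c) = 0 + i * l := by ring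
      have e2 : c + l + (i * l - c) = 0 + (i + 1) * l := by ring
      rwa [e1, e2] at this
    rw [Finset.sum_congr rfl h1, Finset.sum_const, Finset.card_range, nsmul_eq_mul]
  · intro x hx
    have := repl_bound hl hp n hn hx
    simpa using this

lemma ub_core (hζ : IsConc ζ) (hZ : GoodVal ζ Z) {f : ℝ → ℝ} (hf : ConvexOn ℝ Set.univ f)
    (c l s F : ℕ → ℝ) (ε B : ℝ) (hε : 0 < ε) (hl : ∀ k, 0 < l k) (hl0 : Tendsto l atTop (𝓝 0))
    (hs : ∀ k, s k = rd f (c k + l k) - rd f (c k))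
    (hF : ∀ k, F k = Z (mkf f (c k) (c k + l k))) (hF0 : Tendsto F atTop (𝓝 0))
    (hFB : ∀ k, F k ≤ B)
    (hlt : ∀ k, l k * ζ (s k / l k) + ε * (l k + s k) < F k) : False := by
  have hs0 : ∀ k, 0 ≤ s k := fun k => by
    rw [hs]; exact sub_nonneg.mpr (rd_mono hf (by linarith [hl k]))
  have hφ0 : ∀ k, 0 ≤ l k * ζ (s k / l k) := fun k =>
    mul_nonneg (hl k).le (conc_nonneg hζ (div_nonneg (hs0 k) (hl k).le))
  have hFpos : ∀ k, 0 < F k := fun k => by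
    have h1 := hlt k
    have h2 := hφ0 k
    have h3 : 0 < ε * (l k + s k) := mul_pos hε (by linarith [hl k, hs0 k])
    linarith
  set n : ℕ → ℕ := fun k => ⌈1 / F k⌉₊ with hn
  have hnpos : ∀ k, 0 < n k := fun k => Nat.ceil_pos.mpr (one_div_pos.mpr (hFpos k))
  have hnpos' : ∀ k, (0:ℝ) < n k := fun k => by exact_mod_cast hnpos k
  have hnF1 : ∀ k, 1 ≤ n k * F k := fun k => by
    have := Nat.le_ceil (1 / F k)
    rwa [div_le_iff₀ (hFpos k)] at this
  have hnF2 : ∀ k, n k * F k ≤ 1 + F k := fun k => by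
    have h1 := (Nat.ceil_lt_add_one (one_div_pos.mpr (hFpos k)).le).le
    have h2 := mul_le_mul_of_nonneg_right h1 (hFpos k).le
    have e : (1 / F k + 1) * F k = 1 + F k := by
      have := (hFpos k).ne'
      field_simp
    linarith
  have hlt' : ∀ k, (n k * l k) * ζ (s k / l k) + ε * (n k * l k + n k * s k) ≤ n k * F k := by
    intro k
    have := mul_le_mul_of_nonneg_left (hlt k).le (hnpos' k).le
    nlinarith
  have hnl0 : ∀ k, 0 ≤ n k * l k := fun k => mul_nonneg (hnpos' k).le (hl k).le
  have hns0 : ∀ k, 0 ≤ n k * s k := fun k => mul_nonneg (hnpos' k).le (hs0 k)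
  set R := (1 + B) / ε with hR
  have hbd : ∀ k, n k * l k + n k * s k ≤ R := fun k => by
    rw [hR, le_div_iff₀ hε]
    have h1 := hlt' k
    have h2 := hnF2 k
    have h3 := hFB k
    have h4 : 0 ≤ (n k * l k) * ζ (s k / l k) :=
      mul_nonneg (hnl0 k) (conc_nonneg hζ (div_nonneg (hs0 k) (hl k).le))
    linarith
  have hnF : Tendsto (fun k => n k * F k) atTop (𝓝 1) := by
    refine tendsto_of_tendsto_of_tendsto_of_le_of_le tendsto_const_nhds ?_ hnF1 hnF2
    simpa using hF0.const_add 1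
  obtain ⟨⟨ℓ, S⟩, hmem, ψ, hψ, hlim⟩ := (isCompact_Icc.prod isCompact_Icc :
    IsCompact (Set.Icc (0:ℝ) R ×ˢ Set.Icc (0:ℝ) R)).tendsto_subseq
    (x := fun k => (n k * l k, n k * s k)) (fun k => ⟨⟨hnl0 k, by linarith [hbd k, hns0 k]⟩,
      ⟨hns0 k, by linarith [hbd k, hnl0 k]⟩⟩)
  have hℓ : Tendsto (fun k => n (ψ k) * l (ψ k)) atTop (𝓝 ℓ) :=
    (continuous_fst.tendsto _).comp hlim
  have hS : Tendsto (fun k => n (ψ k) * s (ψ k)) atTop (𝓝 S) :=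
    (continuous_snd.tendsto _).comp hlim
  have hψt := hψ.tendsto_atTop
  have hl0' : Tendsto (fun k => l (ψ k)) atTop (𝓝 0) := hl0.comp hψt
  have hnF' : Tendsto (fun k => n (ψ k) * F (ψ k)) atTop (𝓝 1) := hnF.comp hψt
  have hℓ0 : 0 ≤ ℓ := hmem.1.1
  have hS0 : 0 ≤ S := hmem.2.1
  have hRpos : 0 ≤ R := hℓ0.trans hmem.1.2
  choose W hWc hWl hWZ hWe using fun k => repl hZ hf (c k) (hl k) (n k) (hnpos k)
  simp only [← hs, ← hF] at hWl hWZ hWe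
  have hfin : ∀ (g : ℝ → ℝ) (e : ℕ → ℝ), ConvexOn ℝ Set.univ g → Tendsto e atTop (𝓝 0) →
      (∀ k, ∀ x ∈ Set.Icc 0 (n (ψ k) * l (ψ k)), |W (ψ k) x - g x| ≤ e k) →
      1 ≤ Z (mkf g 0 ℓ) := by
    intro g e hg he hge
    have hc := tauConv_mkf (fun k => W (ψ k)) g (fun _ => 0) (fun k => n (ψ k) * l (ψ k)) 0 ℓ
      (R + 1) (fun k => hWc _) hg (fun k => hnl0 _) hℓ0 tendsto_const_nhds hℓ (by linarith)
      (fun k x _ y _ => (hWl (ψ k) x y).trans (mul_le_mul_of_nonneg_right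
        (by linarith [hbd (ψ k), hnl0 (ψ k)]) (abs_nonneg _))) e he hge
    refine gv_usc hZ hc (B := 1 + B) ?_ (Frequently.of_forall ?_)
    · intro k
      rw [hWZ]
      linarith [hnF2 (ψ k), hFB (ψ k)]
    · intro k
      rw [hWZ]
      exact hnF1 _
  rcases hℓ0.eq_or_lt with h0 | hpos
  · subst h0
    have := hfin (fun _ => 0) (fun k => 2 * (n (ψ k) * s (ψ k)) * l (ψ k) +
      (n (ψ k) * s (ψ k)) * (n (ψ k) * l (ψ k)) / 2) zero_cvx (by
        have h1 := ((hS.const_mul 2).mul hl0').add ((hS.mul hℓ).div_const 2)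
        simpa using h1) (by
        intro k x hx
        have h1 := hWe (ψ k) x hx
        have h2 : s (ψ k) / l (ψ k) * (x ^ 2 / 2) ≤
            (n (ψ k) * s (ψ k)) * (n (ψ k) * l (ψ k)) / 2 := by
          have h3 : x ^ 2 ≤ (n (ψ k) * l (ψ k)) ^ 2 := pow_le_pow_left₀ hx.1 hx.2 2
          have h4 := mul_le_mul_of_nonneg_left h3 (div_nonneg (hs0 (ψ k)) (hl (ψ k)).le)
          have e : s (ψ k) / l (ψ k) * (n (ψ k) * l (ψ k)) ^ 2 =
            (n (ψ k) * s (ψ k)) * (n (ψ k) * l (ψ k)) := by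
            have := (hl (ψ k)).ne'
            field_simp
          linarith
        have h3 : 0 ≤ s (ψ k) / l (ψ k) * (x ^ 2 / 2) :=
          mul_nonneg (div_nonneg (hs0 (ψ k)) (hl (ψ k)).le) (by positivity)
        rw [abs_le] at h1 ⊢
        have h4 := hns0 (ψ k)
        have h5 := mul_nonneg h4 (hnl0 (ψ k))
        have h6 := mul_nonneg h4 (hl (ψ k)).le
        constructor <;> linarith [h1.1, h1.2])
    rw [gv_pt hZ zero_cvx] at this
    linarith
  · have hσk : ∀ k, s k / l k = (n k * s k) / (n k * l k) := fun k => by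
      have h1 := (hl k).ne'
      have h2 := (hnpos' k).ne'
      field_simp
    have hσ : Tendsto (fun k => s (ψ k) / l (ψ k)) atTop (𝓝 (S / ℓ)) := by
      simp only [hσk]
      exact hS.div hℓ hpos.ne'
    have hSℓ : 0 ≤ S / ℓ := div_nonneg hS0 hpos.le
    have h1 := hfin (fun x => S / ℓ * (x - 0) ^ 2 / 2) (fun k => 2 * (n (ψ k) * s (ψ k)) * l (ψ k) +
      |s (ψ k) / l (ψ k) - S / ℓ| * (n (ψ k) * l (ψ k)) ^ 2 / 2) (quad_cvx hSℓ 0) (by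
        have h1 := ((hS.const_mul 2).mul hl0').add
          ((((hσ.sub_const (S / ℓ)).abs).mul (hℓ.pow 2)).div_const 2)
        simpa using h1) (by
        intro k x hx
        have h1 := hWe (ψ k) x hx
        have h3 : x ^ 2 ≤ (n (ψ k) * l (ψ k)) ^ 2 := pow_le_pow_left₀ hx.1 hx.2 2
        have h4 := mul_le_mul_of_nonneg_left h3 (abs_nonneg (s (ψ k) / l (ψ k) - S / ℓ))
        have e : W (ψ k) x - S / ℓ * (x - 0) ^ 2 / 2 =
          (W (ψ k) x - s (ψ k) / l (ψ k) * (x ^ 2 / 2)) +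
            (s (ψ k) / l (ψ k) - S / ℓ) * x ^ 2 / 2 := by ring
        rw [e]
        refine (abs_add_le _ _).trans (add_le_add h1 ?_)
        rw [abs_div, abs_mul, abs_of_nonneg (sq_nonneg x), abs_of_pos (by norm_num : (0:ℝ) < 2)]
        linarith)
    rw [gv_quad hζ hZ hpos hSℓ 0 0 (fun x _ => by ring), sub_zero] at h1
    have hζt : Tendsto (fun k => ζ (s (ψ k) / l (ψ k))) atTop (𝓝 (ζ (S / ℓ))) := by
      have hc := conc_cont hζ (S / ℓ) hSℓ
      exact hc.tendsto.comp (tendsto_nhdsWithin_iff.mpr ⟨hσ, Eventually.of_forall fun k =>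
        div_nonneg (hs0 _) (hl _).le⟩)
    have h2 : ℓ * ζ (S / ℓ) + ε * (ℓ + S) ≤ 1 :=
      le_of_tendsto_of_tendsto' ((hℓ.mul hζt).add ((hℓ.add hS).const_mul ε)) hnF'
        (fun k => hlt' (ψ k))
    have h3 : 0 < ε * (ℓ + S) := mul_pos hε (by linarith)
    linarith

lemma gv_mono (hζ : IsConc ζ) (hZ : GoodVal ζ Z) {f : ℝ → ℝ} (hf : ConvexOn ℝ Set.univ f)
    {a b c d : ℝ} (h1 : a ≤ c) (h2 : c ≤ d) (h3 : d ≤ b) : Z (mkf f c d) ≤ Z (mkf f a b) := by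
  have e1 := gv_cut hZ hf h1 (h2.trans h3)
  have e2 := gv_cut hZ hf h2 h3
  have := gv_nonneg hζ hZ hf h1
  have := gv_nonneg hζ hZ hf h3
  linarith

lemma gv_ub (hζ : IsConc ζ) (hZ : GoodVal ζ Z) {f : ℝ → ℝ} (hf : ConvexOn ℝ Set.univ f)
    {a b : ℝ} (hab : a < b) :
    Z (mkf f a b) ≤ (b - a) * ζ ((rd f b - rd f a) / (b - a)) := by
  by_contra hcon
  push Not at hcon
  have hS : 0 ≤ rd f b - rd f a := sub_nonneg.mpr (rd_mono hf hab.le)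
  have hLpos : 0 < (b - a) + (rd f b - rd f a) := by linarith
  set ε := (Z (mkf f a b) - (b - a) * ζ ((rd f b - rd f a) / (b - a))) /
    (2 * ((b - a) + (rd f b - rd f a))) with hεd
  have hε : 0 < ε := div_pos (by linarith) (by linarith)
  have hε2 : (b - a) * ζ ((rd f b - rd f a) / (b - a)) + ε * ((b - a) + (rd f b - rd f a)) <
      Z (mkf f a b) := by
    have e : ε * ((b - a) + (rd f b - rd f a)) =
      (Z (mkf f a b) - (b - a) * ζ ((rd f b - rd f a) / (b - a))) / 2 := by
      rw [hεd]; field_simp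
    rw [e]; linarith
  set l : ℕ → ℝ := fun k => (b - a) / ((k + 1 : ℕ) : ℝ) with hl
  have hlpos : ∀ k, 0 < l k := fun k => by
    have : 0 < b - a := by linarith
    simp only [hl]; positivity
  have hNl : ∀ k : ℕ, ((k + 1 : ℕ) : ℝ) * l k = b - a := fun k => by
    have : ((k + 1 : ℕ) : ℝ) ≠ 0 := by positivity
    simp only [hl]; field_simp
  have hNl' : ∀ k : ℕ, a + ((k + 1 : ℕ) : ℝ) * l k = b := fun k => by rw [hNl]; ring
  have hl0 : Tendsto l atTop (𝓝 0) :=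
    (tendsto_const_div_atTop_nhds_zero_nat (b - a)).comp (tendsto_add_atTop_nat 1)
  have hex : ∀ k, ∃ i, i < k + 1 ∧ l k * ζ (sl f a (l k) i / l k) + ε * (l k + sl f a (l k) i) <
      Z (mkf f (a + i * l k) (a + (i + 1) * l k)) := by
    intro k
    by_contra hno
    push Not at hno
    have h1 := gv_sum hZ hf a (hlpos k).le (k + 1)
    rw [hNl'] at h1
    have h2 := Finset.sum_le_sum (s := Finset.range (k + 1))
      (fun i hi => hno i (Finset.mem_range.mp hi))
    rw [← h1, Finset.sum_add_distrib, ← Finset.mul_sum _ (fun i => l k + sl f a (l k) i),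
      Finset.sum_add_distrib, sl_sum, hNl',
      Finset.sum_const, Finset.card_range, nsmul_eq_mul, hNl] at h2
    have h3 := conc_jensen hζ (k + 1) (Nat.succ_pos k) (l k) (hlpos k) (sl f a (l k))
      (fun i => sl_nonneg hf a (hlpos k).le i)
    rw [sl_sum, hNl', hNl] at h3
    linarith
  choose i hik hi using hex
  set c : ℕ → ℝ := fun k => a + i k * l k with hc
  have hcl : ∀ k, c k + l k = a + (i k + 1) * l k := fun k => by simp only [hc]; ring
  have hca : ∀ k, a ≤ c k := fun k => by
    have := mul_nonneg (Nat.cast_nonneg (α := ℝ) (i k)) (hlpos k).le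
    simp only [hc]; linarith
  have hcb : ∀ k, c k + l k ≤ b := fun k => by
    rw [hcl, ← hNl' k]
    have : ((i k : ℝ) + 1) ≤ ((k + 1 : ℕ) : ℝ) := by exact_mod_cast hik k
    have := mul_le_mul_of_nonneg_right this (hlpos k).le
    linarith
  obtain ⟨p, hp, ψ, hψ, hlim⟩ := (isCompact_Icc : IsCompact (Set.Icc a b)).tendsto_subseq
    (x := c) (fun k => ⟨hca k, by linarith [hcb k, hlpos k]⟩)
  have hl0' : Tendsto (fun k => l (ψ k)) atTop (𝓝 0) := hl0.comp hψ.tendsto_atTop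
  have hFB : ∀ k, Z (mkf f (c k) (c k + l k)) ≤ Z (mkf f a b) := fun k =>
    gv_mono hζ hZ hf (hca k) (by linarith [hlpos k]) (hcb k)
  have hconv : TauConv (fun k => mkf f (c (ψ k)) (c (ψ k) + l (ψ k))) (mkf f p p) := by
    refine tauConv_mkf (fun _ => f) f (fun k => c (ψ k)) (fun k => c (ψ k) + l (ψ k)) p p
      (|rd f a| + |rd f b| + 1) (fun _ => hf) hf (fun k => by linarith [hlpos (ψ k)]) le_rfl hlim
      (by simpa using hlim.add hl0') (by positivity) ?_ (fun _ => 0) tendsto_const_nhds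
      (fun k x _ => by simp)
    intro k x hx y hy
    refine cvx_lip hf (a := a) (b := b) ?_ ?_ x ?_ y ?_
    · linarith [neg_abs_le (rd f a), abs_nonneg (rd f b)]
    · linarith [le_abs_self (rd f b), abs_nonneg (rd f a)]
    · exact ⟨(hca _).trans hx.1, hx.2.trans (hcb _)⟩
    · exact ⟨(hca _).trans hy.1, hy.2.trans (hcb _)⟩
  refine ub_core hζ hZ hf (fun k => c (ψ k)) (fun k => l (ψ k))
    (fun k => rd f (c (ψ k) + l (ψ k)) - rd f (c (ψ k)))
    (fun k => Z (mkf f (c (ψ k)) (c (ψ k) + l (ψ k)))) ε (Z (mkf f a b)) hε (fun k => hlpos _)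
    hl0' (fun _ => rfl) (fun _ => rfl) ?_ (fun k => hFB _) ?_
  · rw [tendsto_order]
    constructor
    · intro δ hδ
      refine Eventually.of_forall fun k => lt_of_lt_of_le hδ ?_
      exact gv_nonneg hζ hZ hf (by linarith [hlpos (ψ k)])
    · intro δ hδ
      by_contra hno
      have h1 : ∃ᶠ k in atTop, δ ≤ Z (mkf f (c (ψ k)) (c (ψ k) + l (ψ k))) := by
        intro h
        exact hno (h.mono fun k hk => not_le.mp hk)
      have := gv_usc hZ hconv (fun k => hFB (ψ k)) h1
      rw [gv_pt hZ hf] at this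
      linarith
  · intro k
    have := hi (ψ k)
    unfold sl at this
    rw [← hcl] at this
    exact this

lemma gv_le {Z' : (ℝ → EReal) → ℝ} (hζ : IsConc ζ) (hZ : GoodVal ζ Z) (hZ' : GoodVal ζ Z')
    {f : ℝ → ℝ} (hf : ConvexOn ℝ Set.univ f) {a b : ℝ} (hab : a ≤ b) :
    Z (mkf f a b) ≤ Z' (mkf f a b) := by
  rcases hab.eq_or_lt with h | h
  · subst h; rw [gv_pt hZ hf, gv_pt hZ' hf]
  · refine gv_lb hζ hZ' hf h fun N hN => ?_
    have hN' : (0:ℝ) < N := by exact_mod_cast hN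
    have hl : 0 < (b - a) / N := div_pos (by linarith) hN'
    have e : a + N * ((b - a) / N) = b := by field_simp; ring
    have h1 := gv_sum hZ hf a hl.le N
    rw [e] at h1
    rw [h1]
    refine Finset.sum_le_sum fun i _ => ?_
    have h2 := gv_ub hζ hZ hf (a := a + i * ((b - a) / N)) (b := a + (i + 1) * ((b - a) / N))
      (by nlinarith)
    have e2 : a + (i + 1) * ((b - a) / N) - (a + i * ((b - a) / N)) = (b - a) / N := by ring
    rw [e2] at h2
    exact h2

lemma gv_unique {Z' : (ℝ → EReal) → ℝ} (hζ : IsConc ζ) (hZ : GoodVal ζ Z) (hZ' : GoodVal ζ Z')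
    {u : ℝ → EReal} (hu : IsLC u) : Z u = Z' u := by
  obtain ⟨f, a, b, M, -, hS, rfl⟩ := lc_rep' hu
  exact le_antisymm (gv_le hζ hZ hZ' hS.cvx hS.hab) (gv_le hζ hZ' hZ hS.cvx hS.hab)

end good

/-- `ζ` extended by `ζ 0` to the negative half line. -/
def zt (ζ : ℝ → ℝ) (t : ℝ) : ℝ := ζ (max t 0)

section zt
variable {ζ : ℝ → ℝ} (hζ : IsConc ζ)
include hζ

lemma zt_cont : Continuous (zt ζ) :=
  (conc_cont hζ).comp_continuous (by fun_prop) (fun x => Set.mem_Ici.mpr (le_max_right _ _))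

lemma zt_nonneg (t : ℝ) : 0 ≤ zt ζ t := conc_nonneg hζ (le_max_right _ _)

lemma zt_zero : zt ζ 0 = 0 := by unfold zt; simp [conc_zero hζ]

lemma zt_mono : Monotone (zt ζ) := fun _ _ h =>
  conc_mono hζ (le_max_right _ _) (max_le_max_right 0 h)

lemma zt_lin (t : ℝ) : zt ζ t ≤ ζ 1 * (1 + |t|) := by
  refine (conc_lin hζ (le_max_right t 0)).trans (mul_le_mul_of_nonneg_left ?_
    (conc_nonneg hζ zero_le_one))
  have := max_le (le_abs_self t) (abs_nonneg t)
  linarith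

lemma zt_mid {s t : ℝ} (hs : 0 ≤ s) (ht : 0 ≤ t) :
    (zt ζ s + zt ζ t) / 2 ≤ zt ζ ((s + t) / 2) := by
  unfold zt
  rw [max_eq_left hs, max_eq_left ht, max_eq_left (by linarith)]
  have := conc_ineq hζ hs ht (s := 1 / 2) (t := 1 / 2) (by norm_num) (by norm_num) (by norm_num)
  have e : 1 / 2 * s + 1 / 2 * t = (s + t) / 2 := by ring
  rw [e] at this
  linarith

lemma zt_tail {ε : ℝ} (hε : 0 < ε) : ∃ K : ℝ, 0 < K ∧
    ∀ t, 0 ≤ t → zt ζ t ≤ zt ζ (min t K) + ε * t := by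
  have h := (hζ.2.2.2.eventually (gt_mem_nhds hε)).and (eventually_gt_atTop 0)
  obtain ⟨K, hK⟩ := eventually_atTop.mp h
  refine ⟨max K 1, by positivity, fun t ht => ?_⟩
  rcases le_total t (max K 1) with h1 | h1
  · rw [min_eq_left h1]
    have := mul_nonneg hε.le ht
    linarith
  · have h2 := hK t ((le_max_left _ _).trans h1)
    have h3 := (div_lt_iff₀ h2.2).mp h2.1
    have h4 := zt_nonneg hζ (min t (max K 1))
    have h5 : zt ζ t = ζ t := by unfold zt; rw [max_eq_left ht]
    linarith

end zt

/-- A monotone function equal to `-M` left of `a` and `M` right of `b`. -/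
structure Slp (r : ℝ → ℝ) (a b M : ℝ) : Prop where
  hab : a ≤ b
  mono : Monotone r
  left : ∀ x, x < a → r x = -M
  right : ∀ x, b ≤ x → r x = M

/-- Difference quotient. -/
def gq (r : ℝ → ℝ) (h x : ℝ) : ℝ := (r (x + h) - r x) / h

namespace Slp
variable {r : ℝ → ℝ} {a b M h : ℝ} (H : Slp r a b M) (hh : 0 < h)
include H

lemma le (x : ℝ) : r x ≤ M := by
  rw [← H.right (max x b) (le_max_right _ _)]; exact H.mono (le_max_left _ _)

lemma ge (x : ℝ) : -M ≤ r x := by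
  rw [← H.left (min x (a - 1)) (lt_of_le_of_lt (min_le_right _ _) (by linarith))]
  exact H.mono (min_le_left _ _)

include hh

lemma gq_nonneg (x : ℝ) : 0 ≤ gq r h x :=
  div_nonneg (sub_nonneg.mpr (H.mono (by linarith))) hh.le

lemma gq_le (x : ℝ) : gq r h x ≤ 2 * M / h := by
  unfold gq
  apply div_le_div_of_nonneg_right _ hh.le
  linarith [H.le (x + h), H.ge x]

lemma gq_supp {x : ℝ} (hx : x ∉ Set.Icc (a - h) b) : gq r h x = 0 := by
  unfold gq
  by_cases h1 : x < a - h
  · rw [H.left x (by linarith), H.left (x + h) (by linarith)]; simp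
  · have : b < x := by
      by_contra h2
      exact hx ⟨not_lt.mp h1, not_lt.mp h2⟩
    rw [H.right x this.le, H.right (x + h) (by linarith)]; simp

omit hh in
lemma gq_meas : Measurable (gq r h) := by
  unfold gq
  have := H.mono.measurable
  exact ((this.comp (measurable_id.add_const h)).sub this).div_const h

lemma integ {ψ : ℝ → ℝ} (hψ : Continuous ψ) (h0 : ψ 0 = 0) :
    Integrable (fun x => ψ (gq r h x)) := by
  obtain ⟨C, hC⟩ := (isCompact_Icc (a := 0) (b := 2 * M / h)).exists_bound_of_continuousOn
    hψ.continuousOn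
  have h1 : IntegrableOn (fun x => ψ (gq r h x)) (Set.Icc (a - h) b) :=
    Measure.integrableOn_of_bounded (by simp) (hψ.measurable.comp H.gq_meas).aestronglyMeasurable
      (M := C) (Eventually.of_forall fun x => hC _ ⟨H.gq_nonneg hh x, H.gq_le hh x⟩)
  rwa [integrableOn_iff_integrable_of_support_subset] at h1
  intro x hx
  by_contra hno
  exact hx (by simp only [H.gq_supp hh hno, h0])

lemma half {ψ : ℝ → ℝ} (hψ : Continuous ψ) (h0 : ψ 0 = 0)
    (hm : ∀ s t, 0 ≤ s → 0 ≤ t → (ψ s + ψ t) / 2 ≤ ψ ((s + t) / 2)) :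
    ∫ x, ψ (gq r (h / 2) x) ≤ ∫ x, ψ (gq r h x) := by
  have hh2 : 0 < h / 2 := by linarith
  have hi := H.integ hh2 hψ h0
  have hi' := hi.comp_add_right (h / 2)
  have e := integral_add_right_eq_self (μ := volume) (fun x => ψ (gq r (h / 2) x)) (h / 2)
  calc ∫ x, ψ (gq r (h / 2) x)
      = ∫ x, (ψ (gq r (h / 2) x) + ψ (gq r (h / 2) (x + h / 2))) / 2 := by
        rw [integral_div, integral_add hi hi', e]; ring
    _ ≤ ∫ x, ψ (gq r h x) := by
        refine integral_mono ((hi.add hi').div_const 2) (H.integ hh hψ h0) fun x => ?_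
        refine (hm _ _ (H.gq_nonneg hh2 _) (H.gq_nonneg hh2 _)).trans (le_of_eq ?_)
        congr 1
        unfold gq
        have e1 : x + h / 2 + h / 2 = x + h := by ring
        rw [e1]
        field_simp
        ring

omit hh in
lemma dyadic {ψ : ℝ → ℝ} (hψ : Continuous ψ) (h0 : ψ 0 = 0)
    (hm : ∀ s t, 0 ≤ s → 0 ≤ t → (ψ s + ψ t) / 2 ≤ ψ ((s + t) / 2)) :
    Antitone (fun n : ℕ => ∫ x, ψ (gq r ((1 / 2) ^ n) x)) := by
  refine antitone_nat_of_succ_le fun n => ?_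
  have := H.half (h := (1 / 2) ^ n) (by positivity) hψ h0 hm
  have e : ((1:ℝ) / 2) ^ n / 2 = (1 / 2) ^ (n + 1) := by ring
  rwa [e] at this

omit hh in
lemma ae_lim : ∀ᵐ x, Tendsto (fun n : ℕ => gq r ((1 / 2) ^ n) x) atTop (𝓝 (deriv r x)) := by
  filter_upwards [H.mono.ae_differentiableAt] with x hx
  have h1 := hx.hasDerivAt.tendsto_slope_zero_right
  have h2 : Tendsto (fun n : ℕ => ((1:ℝ) / 2) ^ n) atTop (𝓝[>] 0) :=
    tendsto_nhdsWithin_iff.mpr ⟨tendsto_pow_atTop_nhds_zero_of_lt_one (by norm_num) (by norm_num),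
      Eventually.of_forall fun n => by simp⟩
  refine (h1.comp h2).congr fun n => ?_
  simp only [Function.comp, smul_eq_mul, gq]
  ring

omit hh in
lemma deriv_nonneg (x : ℝ) : 0 ≤ deriv r x := H.mono.deriv_nonneg

variable {ζ : ℝ → ℝ} (hζ : IsConc ζ)
include hζ

omit hh in
lemma fatou (m : ℕ) : Integrable (fun x => zt ζ (deriv r x)) ∧
    ∫ x, zt ζ (deriv r x) ≤ ∫ x, zt ζ (gq r ((1 / 2) ^ m) x) := by
  have hanti := H.dyadic (zt_cont hζ) (zt_zero hζ) (fun s t => zt_mid hζ)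
  have hmeas : Measurable (fun x => zt ζ (deriv r x)) :=
    (zt_cont hζ).measurable.comp (measurable_deriv r)
  have key : ∫⁻ x, ENNReal.ofReal (zt ζ (deriv r x)) ≤
      ENNReal.ofReal (∫ x, zt ζ (gq r ((1 / 2) ^ m) x)) := by
    have h1 : ∫⁻ x, ENNReal.ofReal (zt ζ (deriv r x)) =
        ∫⁻ x, liminf (fun n : ℕ => ENNReal.ofReal (zt ζ (gq r ((1 / 2) ^ n) x))) atTop := by
      refine lintegral_congr_ae ?_
      filter_upwards [H.ae_lim] with x hx
      exact (((ENNReal.continuous_ofReal.comp (zt_cont hζ)).tendsto _).comp hx).liminf_eq.symm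
    rw [h1]
    refine (lintegral_liminf_le fun n => ?_).trans ?_
    · exact ENNReal.measurable_ofReal.comp ((zt_cont hζ).measurable.comp H.gq_meas)
    · refine (liminf_le_of_frequently_le ?_)
      refine (Eventually.frequently ?_)
      filter_upwards [eventually_ge_atTop m] with n hn
      rw [← ofReal_integral_eq_lintegral_ofReal (H.integ (by positivity) (zt_cont hζ) (zt_zero hζ))
        (Eventually.of_forall fun x => zt_nonneg hζ _)]
      exact ENNReal.ofReal_le_ofReal (hanti hn)
  have hInt : Integrable (fun x => zt ζ (deriv r x)) :=
    ⟨hmeas.aestronglyMeasurable, by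
      rw [hasFiniteIntegral_iff_ofReal (Eventually.of_forall fun x => zt_nonneg hζ _)]
      exact lt_of_le_of_lt key ENNReal.ofReal_lt_top⟩
  refine ⟨hInt, ?_⟩
  rw [← ofReal_integral_eq_lintegral_ofReal hInt (Eventually.of_forall fun x => zt_nonneg hζ _)]
    at key
  exact (ENNReal.ofReal_le_ofReal_iff (integral_nonneg fun x => zt_nonneg hζ _)).mp key

omit hh in
lemma upper {ε : ℝ} (hε : 0 < ε) : ∃ n : ℕ,
    ∫ x, zt ζ (gq r ((1 / 2) ^ n) x) < (∫ x, zt ζ (deriv r x)) + ε := by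
  set I := ∫ x, gq r ((1 / 2) ^ 0) x with hI
  have hI0 : 0 ≤ I := integral_nonneg fun x => H.gq_nonneg (by positivity) x
  have hε' : 0 < ε / (2 * (I + 1)) := by positivity
  obtain ⟨K, hK, hKt⟩ := zt_tail hζ hε'
  have hψ : Continuous (fun t => zt ζ (min t K)) :=
    (zt_cont hζ).comp (by fun_prop)
  have hψ0 : (fun t => zt ζ (min t K)) 0 = 0 := by
    simp only [min_eq_left hK.le, zt_zero hζ]
  have hlim : Tendsto (fun n : ℕ => ∫ x, zt ζ (min (gq r ((1 / 2) ^ n) x) K)) atTop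
      (𝓝 (∫ x, zt ζ (min (deriv r x) K))) := by
    refine tendsto_integral_of_dominated_convergence
      ((Set.Icc (a - 1) b).indicator fun _ => zt ζ K) ?_ ?_ ?_ ?_
    · intro n
      exact (hψ.measurable.comp H.gq_meas).aestronglyMeasurable
    · exact (integrableOn_const (by simp) (by simp)).integrable_indicator measurableSet_Icc
    · intro n
      refine Eventually.of_forall fun x => ?_
      rw [Real.norm_of_nonneg (zt_nonneg hζ _)]
      by_cases hx : x ∈ Set.Icc (a - 1) b
      · rw [Set.indicator_of_mem hx]
        exact zt_mono hζ (min_le_right _ _)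
      · rw [Set.indicator_of_notMem hx, H.gq_supp (by positivity), min_eq_left hK.le, zt_zero hζ]
        intro h'
        have h1 : ((1:ℝ) / 2) ^ n ≤ 1 := pow_le_one₀ (by norm_num) (by norm_num)
        exact hx ⟨by linarith [h'.1], h'.2⟩
    · filter_upwards [H.ae_lim] with x hx
      exact (hψ.tendsto _).comp hx
  have hle : ∫ x, zt ζ (min (deriv r x) K) ≤ ∫ x, zt ζ (deriv r x) := by
    refine integral_mono_of_nonneg (Eventually.of_forall fun x => zt_nonneg hζ _)
      (H.fatou hζ 0).1 (Eventually.of_forall fun x => zt_mono hζ (min_le_left _ _))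
  have hlt : ∫ x, zt ζ (min (deriv r x) K) < (∫ x, zt ζ (deriv r x)) + ε / 2 := by linarith
  have hev := hlim.eventually (gt_mem_nhds hlt)
  obtain ⟨n, hn⟩ := hev.exists
  refine ⟨n, ?_⟩
  have hhn : (0:ℝ) < (1 / 2) ^ n := by positivity
  have hgi := H.integ hhn continuous_id rfl
  have h1 : ∫ x, zt ζ (gq r ((1 / 2) ^ n) x) ≤
      ∫ x, (zt ζ (min (gq r ((1 / 2) ^ n) x) K) + ε / (2 * (I + 1)) * id (gq r ((1 / 2) ^ n) x)) :=
    integral_mono (H.integ hhn (zt_cont hζ) (zt_zero hζ))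
      ((H.integ hhn hψ hψ0).add (hgi.const_mul _)) (fun x => hKt _ (H.gq_nonneg hhn x))
  rw [integral_add (H.integ hhn hψ hψ0) (hgi.const_mul _), integral_const_mul] at h1
  have h2 := H.dyadic continuous_id rfl (fun s t _ _ => le_rfl) (Nat.zero_le n)
  simp only [id] at h2 h1
  have h3 : ε / (2 * (I + 1)) * ∫ x, gq r ((1 / 2) ^ n) x ≤ ε / (2 * (I + 1)) * I :=
    mul_le_mul_of_nonneg_left h2 hε'.le
  have h4 : ε / (2 * (I + 1)) * I < ε / 2 := by
    rw [div_mul_eq_mul_div, div_lt_div_iff₀ (by positivity) (by norm_num)]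
    nlinarith
  linarith

end Slp

/-- The functional. -/
def Zf (ζ : ℝ → ℝ) (u : ℝ → EReal) : ℝ :=
  ∫ x in interior (edom u), zt ζ (deriv (rd (toRealFn u)) x)

lemma rd_congr {f g : ℝ → ℝ} {x : ℝ} (h : f =ᶠ[𝓝 x] g) : rd f =ᶠ[𝓝 x] rd g := by
  filter_upwards [h.eventually_nhds] with y hy
  exact Filter.EventuallyEq.derivWithin_eq_of_nhds hy

lemma drd_congr {f g : ℝ → ℝ} {x : ℝ} (h : f =ᶠ[𝓝 x] g) : deriv (rd f) x = deriv (rd g) x :=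
  (rd_congr h).deriv_eq

lemma toRealFn_mkf {f : ℝ → ℝ} {a b x : ℝ} (hx : x ∈ Set.Ioo a b) :
    toRealFn (mkf f a b) =ᶠ[𝓝 x] f := by
  filter_upwards [Ioo_mem_nhds hx.1 hx.2] with y hy
  unfold toRealFn
  rw [mkf_mem ⟨hy.1.le, hy.2.le⟩, EReal.toReal_coe]

lemma Zf_mkf (ζ f : ℝ → ℝ) (a b : ℝ) :
    Zf ζ (mkf f a b) = ∫ x in Set.Ioo a b, zt ζ (deriv (rd f) x) := by
  unfold Zf
  rw [edom_mkf, interior_Icc]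
  refine setIntegral_congr_fun measurableSet_Ioo fun x hx => ?_
  simp only [drd_congr (toRealFn_mkf hx)]

lemma SlopeExt.slp {f : ℝ → ℝ} {a b M : ℝ} (h : SlopeExt f a b M) : Slp (rd f) a b M where
  hab := h.hab
  mono := rd_mono h.cvx
  left := fun x hx => by
    have h1 : HasDerivAt (fun y => f a + M * (a - y)) (-M) x := by
      have := (((hasDerivAt_id' x).const_sub a).const_mul M).const_add (f a)
      simpa using this
    refine rd_eq_of_hasDeriv (h1.congr_of_eventuallyEq ?_)
    filter_upwards [Iio_mem_nhds hx] with y hy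
    exact h.left y (le_of_lt hy)
  right := fun x hx => by
    have h1 : HasDerivAt (fun y => f b + M * (y - b)) M x := by
      have := (((hasDerivAt_id' x).sub_const b).const_mul M).const_add (f b)
      simpa using this
    exact (h1.hasDerivWithinAt.congr (fun y hy => h.right y (hx.trans (le_of_lt hy)))
      (h.right x hx)).derivWithin (uniqueDiffWithinAt_Ioi x)

lemma Zf_ext {ζ : ℝ → ℝ} (hζ : IsConc ζ) {f : ℝ → ℝ} {a b M : ℝ} (h : SlopeExt f a b M) :
    Zf ζ (mkf f a b) = ∫ x, zt ζ (deriv (rd f) x) := by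
  rw [Zf_mkf, ← integral_Icc_eq_integral_Ioo]
  refine setIntegral_eq_integral_of_forall_compl_eq_zero fun x hx => ?_
  have h0 : deriv (rd f) x = 0 := by
    by_cases h1 : x < a
    · have : rd f =ᶠ[𝓝 x] fun _ => -M := by
        filter_upwards [Iio_mem_nhds h1] with y hy
        exact h.slp.left y hy
      rw [this.deriv_eq, deriv_const]
    · have h2 : b < x := by
        by_contra h2
        exact hx ⟨not_lt.mp h1, not_lt.mp h2⟩
      have : rd f =ᶠ[𝓝 x] fun _ => M := by
        filter_upwards [Ioi_mem_nhds h2] with y hy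
        exact h.slp.right y (le_of_lt hy)
      rw [this.deriv_eq, deriv_const]
  rw [h0, zt_zero hζ]

lemma LipBound.mono {u : ℝ → EReal} {L M : ℝ} (h : LipBound u L) (hLM : L ≤ M) : LipBound u M :=
  fun x hx y hy => (h x hx y hy).trans (mul_le_mul_of_nonneg_right hLM (norm_nonneg _))

/-- recovery -/
lemma recov {F : ℕ → ℝ → ℝ} {f : ℝ → ℝ} {A B : ℕ → ℝ} {a b M : ℝ}
    (hF : ∀ k, SlopeExt (F k) (A k) (B k) M)
    (hc : TauConv (fun k => mkf (F k) (A k) (B k)) (mkf f a b)) {y : ℝ}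
    (hy : y ∈ Set.Icc a b) : (∃ yk : ℕ → ℝ, Tendsto yk atTop (𝓝 y) ∧
      ∀ᶠ k in atTop, yk k ∈ Set.Icc (A k) (B k)) ∧ Tendsto (fun k => F k y) atTop (𝓝 (f y)) := by
  obtain ⟨yk, h1, h2⟩ := hc.2.2.2.1 y
  rw [mkf_mem hy] at h2
  have h3 : ∀ᶠ k in atTop, yk k ∈ Set.Icc (A k) (B k) := by
    filter_upwards [h2.eventually (gt_mem_nhds (EReal.coe_lt_top (f y)))] with k hk
    by_contra hno
    simp only [mkf_notMem hno, lt_self_iff_false] at hk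
  refine ⟨⟨yk, h1, h3⟩, ?_⟩
  have h4 : Tendsto (fun k => F k (yk k)) atTop (𝓝 (f y)) := by
    have h5 : Tendsto (fun k => (mkf (F k) (A k) (B k) (yk k)).toReal) atTop (𝓝 (f y)) :=
      (EReal.tendsto_toReal (EReal.coe_ne_top _) (EReal.coe_ne_bot _)).comp h2
    refine h5.congr' ?_
    filter_upwards [h3] with k hk
    rw [mkf_mem hk, EReal.toReal_coe]
  have h5 : Tendsto (fun k => F k y - F k (yk k)) atTop (𝓝 0) := by
    refine squeeze_zero_norm (a := fun k => M * |y - yk k|) (fun k => (hF k).lip _ _) ?_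
    simpa using ((h1.const_sub y).abs).const_mul M
  simpa using h5.add h4

lemma conv_ends {F : ℕ → ℝ → ℝ} {f : ℝ → ℝ} {A B : ℕ → ℝ} {a b M : ℝ}
    (hF : ∀ k, SlopeExt (F k) (A k) (B k) M) (hab : a ≤ b)
    (hc : TauConv (fun k => mkf (F k) (A k) (B k)) (mkf f a b)) :
    Tendsto A atTop (𝓝 a) ∧ Tendsto B atTop (𝓝 b) := by
  obtain ⟨⟨ak, ha1, ha2⟩, ha3⟩ := recov hF hc (Set.left_mem_Icc.mpr hab)
  obtain ⟨⟨bk, hb1, hb2⟩, hb3⟩ := recov hF hc (Set.right_mem_Icc.mpr hab)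
  -- no point outside `[a,b]` is frequently in the domains
  have key : ∀ z, z ∉ Set.Icc a b → ∀ᶠ k in atTop, z ∉ Set.Icc (A k) (B k) := by
    intro z hz
    by_contra hno
    have hfr : ∃ᶠ k in atTop, z ∈ Set.Icc (A k) (B k) := by
      intro h; exact hno h
    have h1 := hc.2.2.1 z (fun _ => z) tendsto_const_nhds
    rw [mkf_notMem hz, top_le_iff] at h1
    have h2 : ∃ᶠ k in atTop, mkf (F k) (A k) (B k) z ≤ ((f a + 1 + M * |z - a| : ℝ) : EReal) := by
      have hev : ∀ᶠ k in atTop, F k a < f a + 1 := ha3.eventually (gt_mem_nhds (by linarith))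
      refine (hfr.and_eventually hev).mono fun k hk => ?_
      rw [mkf_mem hk.1, EReal.coe_le_coe_iff]
      have := (abs_le.mp ((hF k).lip z a)).2
      linarith [hk.2]
    have h3 := liminf_le_of_frequently_le h2
    rw [h1, top_le_iff] at h3
    exact EReal.coe_ne_top _ h3
  constructor
  · rw [tendsto_order]
    constructor
    · intro c hca
      have h1 := ha1.eventually (lt_mem_nhds hca)
      filter_upwards [h1, ha2, key c (fun h => absurd h.1 (not_le.mpr hca))] with k h2 h3 h4
      by_contra h5
      exact h4 ⟨not_lt.mp h5, h2.le.trans h3.2⟩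
    · intro c hac
      filter_upwards [ha1.eventually (gt_mem_nhds hac), ha2] with k h2 h3
      exact lt_of_le_of_lt h3.1 h2
  · rw [tendsto_order]
    constructor
    · intro c hcb
      filter_upwards [hb1.eventually (lt_mem_nhds hcb), hb2] with k h2 h3
      exact lt_of_lt_of_le h2 h3.2
    · intro c hbc
      have h1 := hb1.eventually (gt_mem_nhds hbc)
      filter_upwards [h1, hb2, key c (fun h => absurd h.2 (not_le.mpr hbc))] with k h2 h3 h4
      by_contra h5
      exact h4 ⟨h3.1.trans h2.le, not_lt.mp h5⟩

lemma conv_ptwise {F : ℕ → ℝ → ℝ} {f : ℝ → ℝ} {A B : ℕ → ℝ} {a b M : ℝ}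
    (hF : ∀ k, SlopeExt (F k) (A k) (B k) M) (hf : SlopeExt f a b M)
    (hc : TauConv (fun k => mkf (F k) (A k) (B k)) (mkf f a b)) (x : ℝ) :
    Tendsto (fun k => F k x) atTop (𝓝 (f x)) := by
  obtain ⟨hA, hB⟩ := conv_ends hF hf.hab hc
  have hcl : Tendsto (fun k => cl (A k) (B k) x) atTop (𝓝 (cl a b x)) := by
    unfold cl
    exact hA.max (hB.min tendsto_const_nhds)
  have h1 := (recov hF hc (cl_mem hf.hab x)).2
  have h2 : Tendsto (fun k => F k (cl (A k) (B k) x) - F k (cl a b x)) atTop (𝓝 0) := by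
    refine squeeze_zero_norm (a := fun k => M * |cl (A k) (B k) x - cl a b x|)
      (fun k => (hF k).lip _ _) ?_
    simpa using ((hcl.sub_const (cl a b x)).abs).const_mul M
  have h3 : Tendsto (fun k => (F k (cl (A k) (B k) x) - F k (cl a b x)) + F k (cl a b x) +
      M * |x - cl (A k) (B k) x|) atTop (𝓝 (0 + f (cl a b x) + M * |x - cl a b x|)) :=
    (h2.add h1).add (((hcl.const_sub x).abs).const_mul M)
  rw [hf.eq_cl x]
  rw [zero_add] at h3
  refine h3.congr fun k => ?_
  rw [(hF k).eq_cl x]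
  ring

lemma conv_rd {F : ℕ → ℝ → ℝ} {f : ℝ → ℝ} (hF : ∀ k, ConvexOn ℝ Set.univ (F k))
    (hf : ConvexOn ℝ Set.univ f) (hc : ∀ x, Tendsto (fun k => F k x) atTop (𝓝 (f x))) {x : ℝ}
    (hx : ContinuousAt (rd f) x) : Tendsto (fun k => rd (F k) x) atTop (𝓝 (rd f x)) := by
  rw [tendsto_order]
  constructor
  · intro c hcx
    have h1 := hx.eventually (lt_mem_nhds hcx)
    have h1' : ∀ᶠ y in 𝓝[<] x, c < rd f y := h1.filter_mono nhdsWithin_le_nhds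
    obtain ⟨y, hy, hyx⟩ := (h1'.and self_mem_nhdsWithin).exists
    have hyx : y < x := hyx
    have h2 := rd_sub hf y x
    have h3 : c * (x - y) < f x - f y := by nlinarith
    have h4 := ((hc x).sub (hc y)).eventually (lt_mem_nhds h3)
    filter_upwards [h4] with k hk
    have h5 := rd_sub (hF k) x y
    by_contra h6
    nlinarith [not_lt.mp h6]
  · intro c hcx
    have h1 := hx.eventually (gt_mem_nhds hcx)
    have h1' : ∀ᶠ y in 𝓝[>] x, rd f y < c := h1.filter_mono nhdsWithin_le_nhds
    obtain ⟨y, hy, hyx⟩ := (h1'.and self_mem_nhdsWithin).exists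
    have hyx : x < y := hyx
    have h2 := rd_sub hf y x
    have h3 : f y - f x < c * (y - x) := by nlinarith
    have h4 := ((hc y).sub (hc x)).eventually (gt_mem_nhds h3)
    filter_upwards [h4] with k hk
    have h5 := rd_sub (hF k) x y
    by_contra h6
    nlinarith [not_lt.mp h6]

lemma conv_phi {ζ : ℝ → ℝ} (hζ : IsConc ζ) {F : ℕ → ℝ → ℝ} {f : ℝ → ℝ} {A B : ℕ → ℝ} {a b M : ℝ}
    (hF : ∀ k, SlopeExt (F k) (A k) (B k) M) (hf : SlopeExt f a b M)
    (hc : TauConv (fun k => mkf (F k) (A k) (B k)) (mkf f a b)) {h : ℝ} (hh : 0 < h) :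
    Tendsto (fun k => ∫ x, zt ζ (gq (rd (F k)) h x)) atTop
      (𝓝 (∫ x, zt ζ (gq (rd f) h x))) := by
  obtain ⟨hA, hB⟩ := conv_ends hF hf.hab hc
  refine tendsto_integral_filter_of_dominated_convergence
      ((Set.Icc (a - 1 - h) (b + 1)).indicator fun _ => zt ζ (2 * M / h)) ?_ ?_ ?_ ?_
  · exact Eventually.of_forall fun k =>
      ((zt_cont hζ).measurable.comp (hF k).slp.gq_meas).aestronglyMeasurable
  · have h1 := hA.eventually (lt_mem_nhds (by linarith : a - 1 < a))
    have h2 := hB.eventually (gt_mem_nhds (by linarith : b < b + 1))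
    filter_upwards [h1, h2] with k hk1 hk2
    refine Eventually.of_forall fun x => ?_
    rw [Real.norm_of_nonneg (zt_nonneg hζ _)]
    by_cases hx : x ∈ Set.Icc (a - 1 - h) (b + 1)
    · rw [Set.indicator_of_mem hx]
      exact zt_mono hζ ((hF k).slp.gq_le hh x)
    · rw [Set.indicator_of_notMem hx, (hF k).slp.gq_supp hh, zt_zero hζ]
      exact fun h' => hx ⟨by linarith [h'.1], by linarith [h'.2]⟩
  · exact (integrableOn_const (by simp) (by simp)).integrable_indicator measurableSet_Icc
  · have hcount := (rd_mono hf.cvx).countable_not_continuousAt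
    have h1 : ∀ᵐ x, ContinuousAt (rd f) x := by
      filter_upwards [hcount.ae_notMem volume] with x hx
      by_contra h; exact hx h
    have h2 : ∀ᵐ x, ContinuousAt (rd f) (x + h) :=
      (measurePreserving_add_right volume h).quasiMeasurePreserving.ae h1
    have hp := conv_ptwise hF hf hc
    filter_upwards [h1, h2] with x hx1 hx2
    have t1 := conv_rd (fun k => (hF k).cvx) hf.cvx hp hx1
    have t2 := conv_rd (fun k => (hF k).cvx) hf.cvx hp hx2
    exact ((zt_cont hζ).tendsto _).comp ((t2.sub t1).div_const h)

lemma Zf_nonneg {ζ : ℝ → ℝ} (hζ : IsConc ζ) (u : ℝ → EReal) : 0 ≤ Zf ζ u :=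
  integral_nonneg fun _ => zt_nonneg hζ _

lemma Zf_usc {ζ : ℝ → ℝ} (hζ : IsConc ζ) : TauUSC (Zf ζ) := by
  intro uk u hc
  obtain ⟨M1, hM1, hL1⟩ := hc.2.2.2.2
  obtain ⟨M2, hM2, hL2⟩ := hc.2.1.2.2.2.2.2
  set M := max M1 M2 with hM
  have hMpos : 0 < M := lt_max_of_lt_left hM1
  obtain ⟨f, a, b, hf, rfl⟩ := lc_rep hc.2.1 hMpos (hL2.mono (le_max_right _ _))
  choose F A B hF hFe using fun k => lc_rep (hc.1 k) hMpos ((hL1 k).mono (le_max_left _ _))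
  have e : uk = fun k => mkf (F k) (A k) (B k) := funext hFe
  subst e
  refine le_of_forall_pos_le_add fun ε hε => ?_
  obtain ⟨n, hn⟩ := hf.slp.upper hζ hε
  have hlim := conv_phi hζ hF hf hc (h := (1 / 2) ^ n) (by positivity)
  refine limsup_le_of_le ⟨0, fun y hy => ?_⟩ ?_
  · obtain ⟨k, hk⟩ := (eventually_map.mp hy).exists
    exact (Zf_nonneg hζ _).trans hk
  · filter_upwards [hlim.eventually (gt_mem_nhds hn)] with k hk
    rw [Zf_ext hζ hf, Zf_ext hζ (hF k)]
    exact ((hF k).slp.fatou hζ n).2.trans hk.le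

lemma Zf_integ {ζ : ℝ → ℝ} (hζ : IsConc ζ) {f : ℝ → ℝ} (hf : ConvexOn ℝ Set.univ f) (a b : ℝ) :
    IntegrableOn (fun x => zt ζ (deriv (rd f) x)) (Set.Ioo a b) := by
  rcases le_or_gt b a with hab | hab
  · rw [Set.Ioo_eq_empty (not_lt.mpr hab)]; exact integrableOn_empty
  have h1 : IntegrableOn (deriv (rd f)) (Set.Ioo a b) := by
    have := ((rd_mono hf).monotoneOn (Set.uIcc a b)).intervalIntegrable_deriv
    rw [intervalIntegrable_iff_integrableOn_Ioo_of_le hab.le] at this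
    exact this
  have hc : IntegrableOn (fun _ : ℝ => (1 : ℝ)) (Set.Ioo a b) := by
    refine integrableOn_const ?_ ?_ <;> simp
  have h2 : IntegrableOn (fun x => ζ 1 * (1 + |deriv (rd f) x|)) (Set.Ioo a b) :=
    (hc.add h1.abs).const_mul _
  refine Integrable.mono' h2 ?_ ?_
  · exact ((zt_cont hζ).measurable.comp (measurable_deriv _)).aestronglyMeasurable
  · refine Eventually.of_forall fun x => ?_
    rw [Real.norm_of_nonneg (zt_nonneg hζ _)]
    exact zt_lin hζ _

lemma acc_eq {S : Set ℝ} {x : ℝ} (hx : x ∈ S) (hS : 𝓝[S ∩ Set.Ioi x] x ≠ ⊥) {F G : ℝ → ℝ}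
    (hFG : ∀ y ∈ S, F y = G y) {m m' : ℝ} (hF : HasDerivWithinAt F m (Set.Ioi x) x)
    (hG : HasDerivWithinAt G m' (Set.Ioi x) x) : m = m' := by
  have hu : UniqueDiffWithinAt ℝ (S ∩ Set.Ioi x) x := by
    rw [uniqueDiffWithinAt_iff_accPt, accPt_principal_iff_nhdsWithin]
    rw [Set.sdiff_singleton_eq_self (by simp)]
    exact ⟨hS⟩
  refine hu.eq_deriv _ (hF.mono Set.inter_subset_right) ?_
  exact (hG.mono Set.inter_subset_right).congr (fun y hy => hFG y hy.1) (hFG x hx)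

lemma contact_ae {f g : ℝ → ℝ} (hf : ConvexOn ℝ Set.univ f) (hg : ConvexOn ℝ Set.univ g) :
    ∀ᵐ x, f x = g x → deriv (rd f) x = deriv (rd g) x := by
  set S : Set ℝ := {x | f x = g x} with hSdef
  set N1 : Set ℝ := {x ∈ S | 𝓝[S ∩ Set.Ioi x] x = ⊥} with hN1
  have c1 : N1.Countable := countable_setOfPred_isolated_right_within
  set T : Set ℝ := S \ N1 with hT
  set N2 : Set ℝ := {x ∈ T | 𝓝[T ∩ Set.Ioi x] x = ⊥} with hN2
  have c2 : N2.Countable := countable_setOfPred_isolated_right_within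
  have hTeq : ∀ x ∈ T, rd f x = rd g x := fun x hx =>
    acc_eq hx.1 (fun h => hx.2 ⟨hx.1, h⟩) (fun y hy => hy) (rd_hasDeriv hf x) (rd_hasDeriv hg x)
  filter_upwards [c1.ae_notMem volume, c2.ae_notMem volume, (rd_mono hf).ae_differentiableAt,
    (rd_mono hg).ae_differentiableAt] with x h1 h2 h3 h4 h5
  have hxT : x ∈ T := ⟨h5, h1⟩
  exact acc_eq hxT (fun h => h2 ⟨hxT, h⟩) hTeq h3.hasDerivAt.hasDerivWithinAt
    h4.hasDerivAt.hasDerivWithinAt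

lemma Zf_ind {ζ : ℝ → ℝ} (f : ℝ → ℝ) (a b : ℝ) :
    Zf ζ (mkf f a b) = ∫ x, (Set.Ioo a b).indicator (fun x => zt ζ (deriv (rd f) x)) x := by
  rw [Zf_mkf, integral_indicator measurableSet_Ioo]

lemma Zf_integ' {ζ : ℝ → ℝ} (hζ : IsConc ζ) {f : ℝ → ℝ} (hf : ConvexOn ℝ Set.univ f) (a b : ℝ) :
    Integrable ((Set.Ioo a b).indicator (fun x => zt ζ (deriv (rd f) x))) := by
  rw [integrable_indicator_iff measurableSet_Ioo]
  exact Zf_integ hζ hf a b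

lemma Ioo_iff_Icc {x a b : ℝ} (h1 : x ≠ a) (h2 : x ≠ b) : x ∈ Set.Ioo a b ↔ x ∈ Set.Icc a b :=
  ⟨fun h => ⟨h.1.le, h.2.le⟩, fun h => ⟨lt_of_le_of_ne h.1 h1.symm, lt_of_le_of_ne h.2 h2⟩⟩

lemma Zf_val {ζ : ℝ → ℝ} (hζ : IsConc ζ) : IsVal (Zf ζ) := by
  intro u v hu hv hm
  obtain ⟨f, a, b, _, -, hf, rfl⟩ := lc_rep' hu
  obtain ⟨g, c, d, _, -, hg, rfl⟩ := lc_rep' hv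
  obtain ⟨p, e, h, _, -, hp, hpe⟩ := lc_rep' hm
  set P : ℝ → ℝ := fun x => max (f x) (g x) with hP
  have hPc : ConvexOn ℝ Set.univ P := hf.cvx.sup hg.cvx
  have hmax : (fun x => max (mkf f a b x) (mkf g c d x)) = mkf P (max a c) (min b d) := by
    ext1 x
    have hI : x ∈ Set.Icc (max a c) (min b d) ↔ x ∈ Set.Icc a b ∧ x ∈ Set.Icc c d := by
      simp only [Set.mem_Icc, max_le_iff, le_min_iff]; tauto
    by_cases h1 : x ∈ Set.Icc a b
    · by_cases h2 : x ∈ Set.Icc c d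
      · rw [mkf_mem h1, mkf_mem h2, mkf_mem (hI.2 ⟨h1, h2⟩)]
        exact (EReal.coe_strictMono.monotone.map_max).symm
      · rw [mkf_notMem h2, mkf_notMem (fun h => h2 (hI.1 h).2), max_eq_right le_top]
    · rw [mkf_notMem h1, mkf_notMem (fun h => h1 (hI.1 h).1), max_eq_left le_top]
  rw [hpe, hmax]
  simp only [Zf_ind]
  rw [← integral_add (Zf_integ' hζ hp.cvx _ _) (Zf_integ' hζ hPc _ _),
    ← integral_add (Zf_integ' hζ hf.cvx _ _) (Zf_integ' hζ hg.cvx _ _)]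
  refine integral_congr_ae ?_
  have hfin : ({a, b, c, d, e, h} : Set ℝ).Countable := (Set.toFinite _).countable
  filter_upwards [hfin.ae_notMem volume, contact_ae hp.cvx hf.cvx, contact_ae hp.cvx hg.cvx,
    contact_ae hPc hf.cvx, contact_ae hPc hg.cvx] with x hx q1 q2 q3 q4
  simp only [Set.mem_insert_iff, Set.mem_singleton_iff, not_or] at hx
  obtain ⟨na, nb, nc, nd, ne, nh⟩ := hx
  have hI : x ∈ Set.Ioo (max a c) (min b d) ↔ x ∈ Set.Icc a b ∧ x ∈ Set.Icc c d := by
    rw [← Ioo_iff_Icc na nb, ← Ioo_iff_Icc nc nd]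
    simp only [Set.mem_Ioo, max_lt_iff, lt_min_iff]; tauto
  have hpx : min (mkf f a b x) (mkf g c d x) = mkf p e h x := congrFun hpe x
  have key : ∀ r : ℝ, (r : EReal) = mkf p e h x → x ∈ Set.Icc e h ∧ p x = r := by
    intro r hr
    by_cases h3 : x ∈ Set.Icc e h
    · rw [mkf_mem h3] at hr
      exact ⟨h3, (EReal.coe_injective hr).symm⟩
    · rw [mkf_notMem h3] at hr
      exact absurd hr (EReal.coe_ne_top r)
  simp only [Set.indicator, hI, Ioo_iff_Icc na nb, Ioo_iff_Icc nc nd, Ioo_iff_Icc ne nh]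
  by_cases h1 : x ∈ Set.Icc a b
  · by_cases h2 : x ∈ Set.Icc c d
    · rw [mkf_mem h1, mkf_mem h2, ← EReal.coe_strictMono.monotone.map_min] at hpx
      obtain ⟨h3, h4⟩ := key _ hpx
      simp only [h1, h2, h3, and_self, if_true]
      rcases le_total (f x) (g x) with hle | hle
      · rw [q1 (h4.trans (min_eq_left hle)), q4 (max_eq_right hle)]
      · rw [q2 (h4.trans (min_eq_right hle)), q3 (max_eq_left hle), add_comm]
    · rw [mkf_mem h1, mkf_notMem h2, min_eq_left le_top] at hpx
      obtain ⟨h3, h4⟩ := key _ hpx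
      simp only [h1, h2, h3, and_false, if_true, if_false, q1 h4]
  · by_cases h2 : x ∈ Set.Icc c d
    · rw [mkf_mem h2, mkf_notMem h1, min_eq_right le_top] at hpx
      obtain ⟨h3, h4⟩ := key _ hpx
      simp only [h1, h2, h3, false_and, if_true, if_false, q2 h4, add_zero, zero_add]
    · rw [mkf_notMem h2, mkf_notMem h1, min_self] at hpx
      have h3 : x ∉ Set.Icc e h := fun h3 => by
        rw [mkf_mem h3] at hpx; exact EReal.coe_ne_top _ hpx.symm
      simp only [h1, h2, h3, false_and, if_false]

lemma rd_add_aff {f : ℝ → ℝ} (hf : ConvexOn ℝ Set.univ f) (α β : ℝ) :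
    rd (fun x => f x + (α * x + β)) = fun x => rd f x + α := by
  ext1 x
  have h1 : HasDerivAt (fun x : ℝ => α * x + β) α x := by
    simpa using ((hasDerivAt_id' x).const_mul α).add_const β
  exact ((rd_hasDeriv hf x).add h1.hasDerivWithinAt).derivWithin (uniqueDiffWithinAt_Ioi x)

lemma rd_shift {f : ℝ → ℝ} (hf : ConvexOn ℝ Set.univ f) (y : ℝ) :
    rd (fun x => f (x - y)) = fun x => rd f (x - y) := by
  ext1 x
  have h1 : HasDerivWithinAt (fun x : ℝ => x - y) 1 (Set.Ioi x) x :=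
    ((hasDerivAt_id' x).sub_const y).hasDerivWithinAt
  have h2 := (rd_hasDeriv hf (x - y)).comp x h1 (fun z hz => by
    simpa using hz)
  rw [mul_one] at h2
  exact h2.derivWithin (uniqueDiffWithinAt_Ioi x)

lemma Zf_dual (ζ : ℝ → ℝ) : DualTransInv (Zf ζ) := by
  intro u hu l c
  obtain ⟨f, a, b, _, -, hf, rfl⟩ := lc_rep' hu
  have e1 : (fun x => mkf f a b x + ((l x + c : ℝ) : EReal)) =
      mkf (fun x => f x + (l 1 * x + c)) a b := by
    ext1 x
    have hl : l x = l 1 * x := by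
      have := l.map_smul x 1
      simp only [smul_eq_mul, mul_one] at this
      rw [this, mul_comm]
    by_cases hx : x ∈ Set.Icc a b
    · rw [mkf_mem hx, mkf_mem hx, ← EReal.coe_add, hl]
    · rw [mkf_notMem hx, mkf_notMem hx, EReal.top_add_coe]
  rw [e1, Zf_mkf, Zf_mkf, rd_add_aff hf.cvx]
  simp only [deriv_add_const]

lemma Zf_trans (ζ : ℝ → ℝ) : TransInv (Zf ζ) := by
  intro u hu y
  obtain ⟨f, a, b, _, -, hf, rfl⟩ := lc_rep' hu
  have e2 : (fun x => mkf f a b (x - y)) = mkf (fun x => f (x - y)) (a + y) (b + y) := by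
    ext1 x
    by_cases hx : x ∈ Set.Icc (a + y) (b + y)
    · have hx' : x - y ∈ Set.Icc a b := ⟨by linarith [hx.1], by linarith [hx.2]⟩
      rw [mkf_mem hx, mkf_mem hx']
    · rw [mkf_notMem hx, mkf_notMem]
      exact fun h' => hx ⟨by linarith [h'.1], by linarith [h'.2]⟩
  rw [e2, Zf_ind, Zf_ind, rd_shift hf.cvx,
    ← integral_sub_right_eq_self
      ((Set.Ioo a b).indicator (fun x => zt ζ (deriv (rd f) x))) y]
  refine integral_congr_ae (Eventually.of_forall fun x => ?_)
  have hI : x ∈ Set.Ioo (a + y) (b + y) ↔ x - y ∈ Set.Ioo a b := by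
    simp only [Set.mem_Ioo, lt_sub_iff_add_lt, sub_lt_iff_lt_add]
  simp only [Set.indicator, hI, deriv_comp_sub_const]

lemma Zf_good {ζ : ℝ → ℝ} (hζ : IsConc ζ) : GoodVal ζ (Zf ζ) := by
  refine ⟨Zf_usc hζ, Zf_val hζ, Zf_trans ζ, Zf_dual ζ, ?_, ?_, ?_⟩
  · rintro u - ⟨x, hx⟩
    unfold Zf
    rw [hx, interior_singleton]; simp
  · intro a b hab
    rw [← mkf_zero_eq, Zf_mkf]
    have : rd (fun _ : ℝ => (0 : ℝ)) = fun _ => 0 := by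
      ext1 x; exact rd_eq_of_hasDeriv (hasDerivAt_const x 0)
    rw [this]
    simp [zt_zero hζ]
  · intro a m ha hm
    have e1 : (fun x => ((a * (x ^ 2 / 2) : ℝ) : EReal) + eIndicator (Set.Icc (-m) m) x) =
        mkf (fun x => a * (x - 0) ^ 2 / 2) (-m) m := by
      ext1 x
      unfold mkf eIndicator
      split_ifs
      · rw [add_zero]; congr 1; ring
      · rw [EReal.coe_add_top]
    have e2 : rd (fun x => a * (x - 0) ^ 2 / 2) = fun x => a * (x - 0) := by
      ext1 x; exact quad_rd a 0 x
    have e3 : ∀ x, deriv (fun x : ℝ => a * (x - 0)) x = a := fun x => by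
      simpa using (((hasDerivAt_id' x).sub_const 0).const_mul a).deriv
    rw [e1, Zf_mkf, e2]
    simp only [e3]
    rw [setIntegral_const, Measure.real, Real.volume_Ioo,
      ENNReal.toReal_ofReal (by linarith), smul_eq_mul]
    unfold zt
    rw [max_eq_left ha.le]; ring

/-- For every `ζ ∈ Conc` there is a functional `Z` on `LC(ℝ)`, unique on
`LC(ℝ)`, that is τ-upper semicontinuous, a simple, translation and dually epi-translation
invariant valuation vanishing on indicators of closed intervals, and satisfies
`Z(a·q + I_{[-m,m]}) = 2m·ζ(a)` for all `a > 0`, `m > 0`. -/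
theorem stmt18 (ζ : ℝ → ℝ) (hζ : IsConc ζ) :
    ∃ Z : (ℝ → EReal) → ℝ, GoodVal ζ Z ∧
      ∀ Z' : (ℝ → EReal) → ℝ, GoodVal ζ Z' → ∀ u : ℝ → EReal, IsLC u → Z' u = Z u := by
  exact ⟨Zf ζ, Zf_good hζ, fun Z' hZ' u hu => gv_unique hζ hZ' (Zf_good hζ) hu⟩

end
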